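/- arXiv:alg-geom/9601020 — 2 statements merged into one kernel-verified Lean document; each statement's English description precedes it below -/
import Mathlib

section
/- Fix an integer d ≥ 1. Then for generic (p_1,…,p_9) ∈ (ℙ²(K))⁹ the following holds: there is, up to a scalar factor, a unique nonzero homogeneous cubic E ∈ K[X,Y,Z] vanishing at all of p_1,…,p_9, and E is irreducible and defines a smooth curve; moreover, every irreducible homogeneous polynomial F ∈ K[X,Y,Z] of degree d not proportional to E satisfies Σ_{i=1}^9 mult_{p_i}(F) ≤ 3d − 1. -/
/-!
Every open condition used below asks that certain linear functionals, whose coefficients are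
multihomogeneous polynomials in the nine points, have no common kernel. Such a condition is
generic as soon as it holds for a single configuration (`NinePoints.gen_of_kernel`: some maximal
minor is a nonzero multihomogeneous polynomial), and finitely many of them can be combined. So it
suffices to exhibit, for each condition, one good configuration, and these may differ.

*Multiplicities.* Fix `d` and `m` with `∑ m i ≥ 3d`, and take the points with parameters `1, …, 9`
on the cuspidal cubic `y z² = x³`, parametrized by `t ↦ (t, t³, 1)`. A form `F` of degree `d` with
multiplicities `m i` there restricts to a polynomial in `t` of degree at most `3d`, without term of
degree `3d - 1`, and divisible by `∏ (t - i) ^ m i`. If it were nonzero, then `∑ m i * i = 0`, which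
is absurd in characteristic zero. So the cubic divides `F`; being smooth at the points, it can be
divided out, and induction on `d` shows that `F` is zero or a multiple of a power of the cubic, all
`m i` being `d / 3` (`NinePoints.eq_cusp_pow`). Adding the normalization `F(1, 0, 0) = 0` when all
`m i` are `d / 3` makes the kernel trivial, so for generic points the forms with these multiplicities
all vanish, or span at most a line (`NinePoints.gen_mult`). Only finitely many `m` matter for
a given `d`, because multiplicities can be truncated.

*The cubic.* Its coefficients are the cofactors of the matrix evaluating the ten cubic monomials at
the nine points and at `(1, 0, 0)`, so they are multihomogeneous in the points. Its partial
derivatives have no common zero if their quadratic multiples span all quartics, which is a condition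
of the above type; for nine suitable points the cubic is `y² z = x³ + z³`, where this is checked
directly (`NinePoints.gen_smooth`).

*Conclusion.* If the cubic `E` were reducible, the leading forms of its factors would be a line and a
conic covering the nine points, but for generic points these contain at most two and five of them. An
irreducible `F` of degree `d` with `∑ m i ≥ 3d` must have all `m i` equal to `k = d / 3`; as `E ^ k`
has these multiplicities too, `F` is a multiple of `E ^ k`, and irreducibility forces `k = 1`.
-/

/-! Basic notions for plane curves over an algebraically closed field `K` of
characteristic zero: the projective plane, multiplicity of a homogeneous
polynomial at a point, ordinary points and nodes, generic tuples of points. -/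

noncomputable section

open scoped BigOperators

/-- The projective plane over `K`. -/
abbrev P2 (K : Type) [Field K] : Type := Projectivization K (Fin 3 → K)

/-- The restriction of `F` to the parametrized line `t ↦ v + t • w`,
as a polynomial in `t`. -/
def linePoly {K : Type} [Field K] (F : MvPolynomial (Fin 3) K) (v w : Fin 3 → K) :
    Polynomial K :=
  MvPolynomial.eval₂ Polynomial.C
    (fun i => Polynomial.C (v i) + Polynomial.C (w i) * Polynomial.X) F

/-- Iterated partial derivative of `F` along a list of coordinate directions. -/
def pderivs {K : Type} [Field K] (l : List (Fin 3)) (F : MvPolynomial (Fin 3) K) :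
    MvPolynomial (Fin 3) K :=
  l.foldr (fun i G => MvPolynomial.pderiv i G) F

/-- `F` vanishes to order at least `m` at the vector `v`:
all partial derivatives of order `< m` vanish at `v`.  (In characteristic zero this
is the statement that all Taylor monomials of total degree `< m` vanish.) -/
def MultAtLeastVec {K : Type} [Field K] (F : MvPolynomial (Fin 3) K) (v : Fin 3 → K)
    (m : ℕ) : Prop :=
  ∀ l : List (Fin 3), l.length < m → MvPolynomial.eval v (pderivs l F) = 0

/-- `F` vanishes to order exactly `m` at the vector `v` (the multiplicity of the
point `[v]` on the curve `{F = 0}` equals `m`). -/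
def IsMultVec {K : Type} [Field K] (F : MvPolynomial (Fin 3) K) (v : Fin 3 → K)
    (m : ℕ) : Prop :=
  MultAtLeastVec F v m ∧
    ∃ l : List (Fin 3), l.length = m ∧ MvPolynomial.eval v (pderivs l F) ≠ 0

/-- `mult_p F ≥ m` for a projective point `p`. -/
def MultAtLeast {K : Type} [Field K] (F : MvPolynomial (Fin 3) K) (p : P2 K) (m : ℕ) :
    Prop :=
  MultAtLeastVec F p.rep m

/-- `mult_p F = m` for a projective point `p`. -/
def IsMultAt {K : Type} [Field K] (F : MvPolynomial (Fin 3) K) (p : P2 K) (m : ℕ) :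
    Prop :=
  IsMultVec F p.rep m

/-- `v` is an ordinary point of multiplicity `m` of `F`: the multiplicity is exactly
`m` and the degree-`m` initial form of `F` at `v` (i.e. `w ↦` the coefficient of
`t^m` in `F(v + t w)`, a homogeneous degree `m` polynomial function of `w`,
well defined modulo the direction `v`) factors into `m` pairwise non-proportional
linear forms (each vanishing on `v`, i.e. linear forms on the tangent plane). -/
def OrdinaryAtVec {K : Type} [Field K] (F : MvPolynomial (Fin 3) K) (v : Fin 3 → K)
    (m : ℕ) : Prop :=
  IsMultVec F v m ∧
  ∃ (c : K) (L : Fin m → Fin 3 → K),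
    (∀ i, ∑ j, L i j * v j = 0) ∧
    (∀ i j, i ≠ j → ∀ a : K, L i ≠ a • L j) ∧
    ∀ w : Fin 3 → K, (linePoly F v w).coeff m = c * ∏ i, ∑ j, L i j * w j

/-- `p` is an ordinary point of multiplicity `m` of `F`; an ordinary point of
multiplicity `2` is a node. -/
def OrdinaryAt {K : Type} [Field K] (F : MvPolynomial (Fin 3) K) (p : P2 K) (m : ℕ) :
    Prop :=
  OrdinaryAtVec F p.rep m

/-- `F` has ordinary points of multiplicity `d i` at the points `p i` and exactly
`k` nodes as its only further singularities: each `p i` is an ordinary point of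
multiplicity `d i`, and outside of the points `p i` the polynomial `F` has exactly
`k` singular points, each of which is a node. -/
def HasOrdinaryAndNodes {K : Type} [Field K] {r : ℕ} (F : MvPolynomial (Fin 3) K)
    (p : Fin r → P2 K) (d : Fin r → ℕ) (k : ℕ) : Prop :=
  (∀ i, OrdinaryAt F (p i) (d i)) ∧
  {q : P2 K | q ∉ Set.range p ∧ MultAtLeast F q 2}.Finite ∧
  {q : P2 K | q ∉ Set.range p ∧ MultAtLeast F q 2}.ncard = k ∧
  ∀ q : P2 K, q ∉ Set.range p → MultAtLeast F q 2 → OrdinaryAt F q 2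

/-- A property `P` of `r`-tuples of points of the projective plane holds
generically: there is a nonzero multihomogeneous polynomial `G` in `r` groups of
`3` variables (so that its non-vanishing locus is a dense Zariski-open subset of
`(ℙ²)^r`) such that `P` holds for every tuple of pairwise distinct points at whose
representatives `G` does not vanish. -/
def GenericTuple (K : Type) [Field K] (r : ℕ) (P : (Fin r → P2 K) → Prop) : Prop :=
  ∃ (G : MvPolynomial (Fin r × Fin 3) K) (n : Fin r → ℕ),
    G ≠ 0 ∧
    (∀ m ∈ G.support, ∀ i : Fin r, ∑ j : Fin 3, m (i, j) = n i) ∧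
    ∀ p : Fin r → P2 K, Function.Injective p →
      MvPolynomial.eval (fun q : Fin r × Fin 3 => (p q.1).rep q.2) G ≠ 0 → P p

end
noncomputable section

/-- The projective point `p` lies on the line with coefficient vector `g`. -/
def OnLine {K : Type} [Field K] (g : Fin 3 → K) (p : P2 K) : Prop :=
  ∑ j, g j * p.rep j = 0

/-- The linear form with coefficient vector `g`, as a homogeneous polynomial. -/
def linearForm {K : Type} [Field K] (g : Fin 3 → K) : MvPolynomial (Fin 3) K :=
  ∑ j, MvPolynomial.C (g j) * MvPolynomial.X j

/-- The curve `{F = 0}` meets the line with coefficient vector `g` transversally: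
the line is not a component of the curve, and at every point `q` of the
intersection the intersection multiplicity of the curve and the line (computed as
the order of vanishing at `t = 0` of `F` restricted to a parametrization
`t ↦ rep q + t • rep b` of the line, `b` any other point of the line) equals the
multiplicity of the curve at `q`. -/
def MeetsTransversally {K : Type} [Field K] (F : MvPolynomial (Fin 3) K)
    (g : Fin 3 → K) : Prop :=
  ¬ (linearForm g ∣ F) ∧
  ∀ q : P2 K, OnLine g q → MvPolynomial.eval q.rep F = 0 →
    ∀ b : P2 K, OnLine g b → b ≠ q →
      ∀ m : ℕ, IsMultAt F q m →
        Polynomial.rootMultiplicity 0 (linePoly F q.rep b.rep) = m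

/-- A property `P` of `r`-tuples of points of the projective plane holds
generically among the tuples satisfying a (Zariski locally closed) incidence
condition `C`: there is a multihomogeneous polynomial `G` in `r` groups of `3`
variables that does not vanish identically on the locus `C` (so that its
non-vanishing locus is a dense open subset of the irreducible locus `C`) such that
`P` holds for every tuple of pairwise distinct points satisfying `C` at whose
representatives `G` does not vanish. -/
def GenericTupleOn (K : Type) [Field K] (r : ℕ) (C : (Fin r → P2 K) → Prop)
    (P : (Fin r → P2 K) → Prop) : Prop :=
  ∃ (G : MvPolynomial (Fin r × Fin 3) K) (n : Fin r → ℕ),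
    (∀ m ∈ G.support, ∀ i : Fin r, ∑ j : Fin 3, m (i, j) = n i) ∧
    (∃ p₀ : Fin r → P2 K, C p₀ ∧
      MvPolynomial.eval (fun q : Fin r × Fin 3 => (p₀ q.1).rep q.2) G ≠ 0) ∧
    ∀ p : Fin r → P2 K, Function.Injective p → C p →
      MvPolynomial.eval (fun q : Fin r × Fin 3 => (p q.1).rep q.2) G ≠ 0 → P p

/-- A property `P` of `s`-tuples of lines (given by nonzero coefficient vectors,
i.e. points of the dual projective plane) holds generically: there is a nonzero
multihomogeneous polynomial `G` in `s` groups of `3` dual variables such that `P`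
holds for every tuple of lines at whose coefficient vectors `G` does not vanish. -/
def GenericLines (K : Type) [Field K] (s : ℕ)
    (P : (Fin s → (Fin 3 → K)) → Prop) : Prop :=
  ∃ (G : MvPolynomial (Fin s × Fin 3) K) (n : Fin s → ℕ),
    G ≠ 0 ∧
    (∀ m ∈ G.support, ∀ i : Fin s, ∑ j : Fin 3, m (i, j) = n i) ∧
    ∀ l : Fin s → Fin 3 → K, (∀ i, l i ≠ 0) →
      MvPolynomial.eval (fun q : Fin s × Fin 3 => l q.1 q.2) G ≠ 0 → P l

end

noncomputable section

namespace NinePoints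

open MvPolynomial

/-! ### Multiplicity as the order of a Taylor expansion -/

section Multiplicity

variable {K : Type} [Field K]

/-- The Taylor expansion of `F` at `v`, i.e. the polynomial `F (X + v)`. -/
def shift (v : Fin 3 → K) : MvPolynomial (Fin 3) K →ₐ[K] MvPolynomial (Fin 3) K :=
  aeval (fun i => X i + C (v i))

lemma pderiv_shift (v : Fin 3 → K) (i : Fin 3) (F : MvPolynomial (Fin 3) K) :
    pderiv i (shift v F) = shift v (pderiv i F) := by
  induction F using MvPolynomial.induction_on with
  | C a => simp [shift]
  | add p q hp hq => simp [hp, hq]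
  | mul_X p j hp =>
    have h : pderiv i (shift v (X j)) = shift v (pderiv i (X j)) := by
      by_cases hij : j = i
      · subst hij; simp [shift]
      · simp [shift, pderiv_X_of_ne hij]
    rw [map_mul, pderiv_mul, pderiv_mul, hp, h, map_add, map_mul, map_mul]

lemma pderivs_shift (v : Fin 3 → K) (l : List (Fin 3)) (F : MvPolynomial (Fin 3) K) :
    pderivs l (shift v F) = shift v (pderivs l F) := by
  induction l with
  | nil => rfl
  | cons i l ih =>
    change pderiv i (pderivs l (shift v F)) = shift v (pderiv i (pderivs l F))
    rw [ih, pderiv_shift]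

lemma constantCoeff_shift (v : Fin 3 → K) (F : MvPolynomial (Fin 3) K) :
    constantCoeff (shift v F) = eval v F := by
  induction F using MvPolynomial.induction_on with
  | C a => simp [shift]
  | add p q hp hq => simp [hp, hq]
  | mul_X p j hp => rw [map_mul, map_mul, map_mul, hp]; simp [shift]

lemma pderivs_append (l : List (Fin 3)) (i : Fin 3) (F : MvPolynomial (Fin 3) K) :
    pderivs (l ++ [i]) F = pderivs l (pderiv i F) := by
  simp [pderivs]

lemma multAtLeastVec_succ {F : MvPolynomial (Fin 3) K} {v : Fin 3 → K} {m : ℕ} :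
    MultAtLeastVec F v (m + 1) ↔
      eval v F = 0 ∧ ∀ i, MultAtLeastVec (pderiv i F) v m := by
  constructor
  · intro h
    refine ⟨h [] (by simp), fun i l hl => ?_⟩
    rw [← pderivs_append]
    exact h _ (by simpa using hl)
  · rintro ⟨h0, h⟩ l hl
    rcases List.eq_nil_or_concat l with rfl | ⟨l, i, rfl⟩
    · exact h0
    · rw [List.concat_eq_append, pderivs_append]
      exact h i l (by simpa using hl)

lemma multAtLeastVec_iff_coeff [CharZero K] (v : Fin 3 → K) (m : ℕ) :
    ∀ F : MvPolynomial (Fin 3) K, MultAtLeastVec F v m ↔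
      ∀ s : Fin 3 →₀ ℕ, s.degree < m → coeff s (shift v F) = 0 := by
  induction m with
  | zero => intro F; simp [MultAtLeastVec]
  | succ m ih =>
    intro F
    rw [multAtLeastVec_succ]
    simp_rw [ih, ← pderiv_shift, coeff_pderiv]
    rw [← constantCoeff_shift, constantCoeff_eq]
    constructor
    · rintro ⟨h0, h⟩ s hs
      by_cases hs0 : s = 0
      · rw [hs0, h0]
      · obtain ⟨i, hi⟩ := Finsupp.ne_iff.mp hs0
        have hi' : Finsupp.single i 1 ≤ s := by
          rw [Finsupp.single_le_iff]; exact Nat.one_le_iff_ne_zero.mpr hi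
        have he : s - Finsupp.single i 1 + Finsupp.single i 1 = s :=
          tsub_add_cancel_of_le hi'
        have hd : (s - Finsupp.single i 1).degree < m := by
          have := congrArg Finsupp.degree he
          rw [map_add, Finsupp.degree_single] at this
          omega
        have := h i _ hd
        rw [he] at this
        rcases mul_eq_zero.mp this with h' | h'
        · exact h'
        · exact absurd h' (Nat.cast_add_one_ne_zero _)
    · intro h
      refine ⟨h 0 (by simp), fun i s hs => ?_⟩
      rw [h _ (by rw [map_add, Finsupp.degree_single]; omega), zero_mul]

/-- The order of vanishing of `F` at `v`, with value `⊤` at `F = 0`. -/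
def ordAt (v : Fin 3 → K) (F : MvPolynomial (Fin 3) K) : ℕ∞ :=
  MvPowerSeries.order (shift v F : MvPowerSeries (Fin 3) K)

lemma ordAt_mul (v : Fin 3 → K) (F G : MvPolynomial (Fin 3) K) :
    ordAt v (F * G) = ordAt v F + ordAt v G := by
  rw [ordAt, map_mul, coe_mul, MvPowerSeries.order_mul]; rfl

lemma multAtLeastVec_iff_ordAt [CharZero K] (v : Fin 3 → K) (m : ℕ)
    (F : MvPolynomial (Fin 3) K) : MultAtLeastVec F v m ↔ (m : ℕ∞) ≤ ordAt v F := by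
  rw [multAtLeastVec_iff_coeff]
  constructor
  · intro h
    refine MvPowerSeries.nat_le_order fun s hs => ?_
    rw [coeff_coe]; exact h s hs
  · intro h s hs
    rw [← coeff_coe]
    exact MvPowerSeries.coeff_of_lt_order (lt_of_lt_of_le (by exact_mod_cast hs) h)

lemma multAtLeastVec_mono {F : MvPolynomial (Fin 3) K} {v : Fin 3 → K} {m n : ℕ}
    (h : MultAtLeastVec F v n) (hmn : m ≤ n) : MultAtLeastVec F v m :=
  fun l hl => h l (hl.trans_le hmn)

lemma multAtLeastVec_one {F : MvPolynomial (Fin 3) K} {v : Fin 3 → K} :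
    MultAtLeastVec F v 1 ↔ eval v F = 0 := by
  rw [multAtLeastVec_succ]
  simp [MultAtLeastVec]

lemma multAtLeastVec_pow [CharZero K] {F : MvPolynomial (Fin 3) K} {v : Fin 3 → K}
    (h : eval v F = 0) (k : ℕ) : MultAtLeastVec (F ^ k) v k := by
  rw [← multAtLeastVec_one, multAtLeastVec_iff_ordAt] at h
  rw [multAtLeastVec_iff_ordAt]
  induction k with
  | zero => simp
  | succ k ih =>
    rw [pow_succ, ordAt_mul]
    push_cast
    exact add_le_add ih (by simpa using h)

/-- Dividing by a form that is smooth at `v` lowers the multiplicity at `v` by at most one. -/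
lemma multAtLeastVec_of_mul [CharZero K] {E G : MvPolynomial (Fin 3) K} {v : Fin 3 → K}
    {m : ℕ} (i : Fin 3) (hE : eval v (pderiv i E) ≠ 0) (h : MultAtLeastVec (E * G) v m) :
    MultAtLeastVec G v (m - 1) := by
  have h2 : ordAt v E ≤ 1 := by
    by_contra hlt
    have : MultAtLeastVec E v 2 := by
      rw [multAtLeastVec_iff_ordAt]
      have := Order.add_one_le_of_lt (not_le.mp hlt)
      rw [one_add_one_eq_two] at this
      exact_mod_cast this
    exact hE (this [i] (by simp))
  rw [multAtLeastVec_iff_ordAt, ordAt_mul] at h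
  rw [multAtLeastVec_iff_ordAt]
  have h3 : (m : ℕ∞) ≤ 1 + ordAt v G := h.trans (by gcongr)
  rw [ENat.natCast_sub, tsub_le_iff_left]
  simpa using h3

end Multiplicity

/-! ### Forms restricted to the cuspidal cubic `y z² = x³` -/

section Cusp

variable {K : Type} [Field K]

/-- The cuspidal cubic `y z² - x³`. -/
def cusp (K : Type) [Field K] : MvPolynomial (Fin 3) K := X 1 * X 2 ^ 2 - X 0 ^ 3

/-- The parametrization `t ↦ (t, t³, 1)` of the smooth locus of the cuspidal cubic. -/
def cuspPt (t : K) : Fin 3 → K := ![t, t ^ 3, 1]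

/-- Restriction of a form to the parametrized cuspidal cubic. -/
def restr (K : Type) [Field K] : MvPolynomial (Fin 3) K →ₐ[K] Polynomial K :=
  aeval ![Polynomial.X, Polynomial.X ^ 3, 1]

lemma eval_restr (t : K) (F : MvPolynomial (Fin 3) K) :
    (restr K F).eval t = eval (cuspPt t) F := by
  induction F using MvPolynomial.induction_on with
  | C a => simp [restr]
  | add p q hp hq => simp [hp, hq]
  | mul_X p j hp =>
    rw [map_mul, Polynomial.eval_mul, hp, map_mul]
    fin_cases j <;> simp [restr, cuspPt]

lemma derivative_restr (F : MvPolynomial (Fin 3) K) :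
    Polynomial.derivative (restr K F) =
      restr K (pderiv 0 F) + restr K (pderiv 1 F) * (3 * Polynomial.X ^ 2) := by
  induction F using MvPolynomial.induction_on with
  | C a => simp [restr]
  | add p q hp hq => simp only [map_add, hp, hq]; ring
  | mul_X p j hp =>
    simp only [map_mul, Polynomial.derivative_mul, hp, pderiv_mul, map_add]
    fin_cases j
    · simp [restr, pderiv_X]; ring
    · simp [restr, pderiv_X]
      rw [map_ofNat Polynomial.C 2]; ring
    · simp [restr, pderiv_X]

/-- Multiplicities of a form bound intersection multiplicities with the cuspidal cubic. -/
lemma pow_dvd_restr [CharZero K] (t : K) (m : ℕ) : ∀ F : MvPolynomial (Fin 3) K,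
    MultAtLeastVec F (cuspPt t) m → (Polynomial.X - Polynomial.C t) ^ m ∣ restr K F := by
  induction m with
  | zero => simp
  | succ m ih =>
    intro F h
    obtain ⟨h0, h1⟩ := multAtLeastVec_succ.mp h
    have hd : (Polynomial.X - Polynomial.C t) ^ m ∣ Polynomial.derivative (restr K F) := by
      rw [derivative_restr]
      exact dvd_add (ih _ (h1 0)) (Dvd.dvd.mul_right (ih _ (h1 1)) _)
    have hroot : (restr K F).IsRoot t := by
      rw [Polynomial.IsRoot, eval_restr, h0]
    by_cases hF : restr K F = 0
    · rw [hF]; exact dvd_zero _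
    have hpos := (Polynomial.rootMultiplicity_pos hF).mpr hroot
    have hder : Polynomial.derivative (restr K F) ≠ 0 := by
      intro h'
      have hc := Polynomial.derivative_eq_zero.mp h'
      rw [Polynomial.eq_C_of_natDegree_eq_zero hc] at hroot hF
      simp at hroot hF
      exact hF hroot
    rw [← Polynomial.le_rootMultiplicity_iff hF]
    rw [← Polynomial.le_rootMultiplicity_iff hder,
      Polynomial.derivative_rootMultiplicity_of_root hroot] at hd
    omega

lemma restr_eq_sum (F : MvPolynomial (Fin 3) K) :
    restr K F = ∑ s ∈ F.support,
      Polynomial.C (coeff s F) * Polynomial.X ^ (s 0 + 3 * s 1) := by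
  rw [restr, aeval_def, eval₂_eq']
  refine Finset.sum_congr rfl fun s _ => ?_
  rw [Fin.prod_univ_three]
  simp [pow_add, pow_mul]

lemma degree_eq_add (s : Fin 3 →₀ ℕ) : s.degree = s 0 + s 1 + s 2 := by
  rw [Finsupp.degree_eq_sum, Fin.sum_univ_three]

lemma natDegree_restr_le {F : MvPolynomial (Fin 3) K} {d : ℕ} (hF : F.IsHomogeneous d) :
    (restr K F).natDegree ≤ 3 * d := by
  rw [restr_eq_sum]
  refine Polynomial.natDegree_sum_le_of_forall_le _ _ fun s hs => ?_
  refine (Polynomial.natDegree_C_mul_X_pow_le _ _).trans ?_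
  have := hF.degree_eq_sum_deg_support hs
  have h2 := degree_eq_add s
  rw [Finsupp.degree_apply] at h2
  omega

/-- The missing exponent `3d - 1` is what forces the `3d` intersection parameters of a curve of
degree `d` with the cuspidal cubic to have sum zero. -/
lemma coeff_restr {F : MvPolynomial (Fin 3) K} {d : ℕ} (hd : 1 ≤ d)
    (hF : F.IsHomogeneous d) : (restr K F).coeff (3 * d - 1) = 0 := by
  rw [restr_eq_sum, Polynomial.finsetSum_coeff]
  refine Finset.sum_eq_zero fun s hs => ?_
  rw [Polynomial.coeff_C_mul, Polynomial.coeff_X_pow, if_neg, mul_zero]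
  have := hF.degree_eq_sum_deg_support hs
  have h2 := degree_eq_add s
  rw [Finsupp.degree_apply] at h2
  omega

/-- The normal form of degree `d` modulo the cuspidal cubic attached to a restriction to it. -/
def lift (K : Type) [Field K] (d : ℕ) : Polynomial K →ₗ[K] MvPolynomial (Fin 3) K :=
  (Polynomial.basisMonomials K).constr K
    (fun e => X 0 ^ (e % 3) * X 1 ^ (e / 3) * X 2 ^ (d - e % 3 - e / 3))

lemma lift_X_pow (d e : ℕ) : lift K d (Polynomial.X ^ e) =
    X 0 ^ (e % 3) * X 1 ^ (e / 3) * X 2 ^ (d - e % 3 - e / 3) := by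
  have := (Polynomial.basisMonomials K).constr_basis K
    (fun e => (X 0 ^ (e % 3) * X 1 ^ (e / 3) * X 2 ^ (d - e % 3 - e / 3) :
      MvPolynomial (Fin 3) K)) e
  simp only [Polynomial.coe_basisMonomials, Polynomial.monomial_one_right_eq_X_pow] at this
  exact this

lemma cusp_homog : (cusp K).IsHomogeneous 3 :=
  ((isHomogeneous_X K 1).mul ((isHomogeneous_X K 2).pow 2)).sub ((isHomogeneous_X K 0).pow 3)

/-- A monomial differs from its normal form by a multiple of the cuspidal cubic. -/
lemma division_monomial (a b c : ℕ) : ∃ G : MvPolynomial (Fin 3) K,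
    G.IsHomogeneous (a + b + c - 3) ∧
    X 0 ^ a * X 1 ^ b * X 2 ^ c - lift K (a + b + c) (Polynomial.X ^ (a + 3 * b)) =
      cusp K * G := by
  have e1 : (a + 3 * b) % 3 = a % 3 := by omega
  have e2 : (a + 3 * b) / 3 = a / 3 + b := by omega
  have e3 : a + b + c - a % 3 - (a / 3 + b) = 2 * (a / 3) + c := by omega
  rw [lift_X_pow, e1, e2, e3]
  obtain ⟨q, r, hr, rfl⟩ : ∃ q r, r < 3 ∧ a = 3 * q + r :=
    ⟨a / 3, a % 3, Nat.mod_lt _ (by norm_num), (Nat.div_add_mod a 3).symm⟩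
  have e4 : (3 * q + r) % 3 = r := by omega
  have e5 : (3 * q + r) / 3 = q := by omega
  rw [e4, e5]
  set x : MvPolynomial (Fin 3) K := X 0 ^ 3
  set w : MvPolynomial (Fin 3) K := X 1 * X 2 ^ 2
  refine ⟨- (X 0 ^ r * X 1 ^ b * X 2 ^ c *
    ∑ i ∈ Finset.range q, x ^ i * w ^ (q - 1 - i)), ?_, ?_⟩
  · rcases Nat.eq_zero_or_pos q with rfl | hq
    · simp [isHomogeneous_zero]
    have hx : x.IsHomogeneous 3 := (isHomogeneous_X K 0).pow 3
    have hw : w.IsHomogeneous 3 := (isHomogeneous_X K 1).mul ((isHomogeneous_X K 2).pow 2)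
    have h1 : (X 0 ^ r * X 1 ^ b * X 2 ^ c : MvPolynomial (Fin 3) K).IsHomogeneous
        (1 * r + 1 * b + 1 * c) :=
      (((isHomogeneous_X K 0).pow r).mul ((isHomogeneous_X K 1).pow b)).mul
        ((isHomogeneous_X K 2).pow c)
    have h2 : (∑ i ∈ Finset.range q, x ^ i * w ^ (q - 1 - i)).IsHomogeneous
        (3 * (q - 1)) := by
      refine IsHomogeneous.sum _ _ _ fun i hi => ?_
      rw [Finset.mem_range] at hi
      have := (hx.pow i).mul (hw.pow (q - 1 - i))
      rwa [← mul_add, show i + (q - 1 - i) = q - 1 by omega] at this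
    have := (h1.mul h2).neg
    rwa [show 1 * r + 1 * b + 1 * c + 3 * (q - 1) = 3 * q + r + b + c - 3 by omega] at this
  · have h := (Commute.all x w).mul_geom_sum₂ q
    have hc : cusp K = w - x := rfl
    rw [hc]
    have : (w - x) * -(X 0 ^ r * X 1 ^ b * X 2 ^ c *
        ∑ i ∈ Finset.range q, x ^ i * w ^ (q - 1 - i)) =
        X 0 ^ r * X 1 ^ b * X 2 ^ c * (x ^ q - w ^ q) := by
      rw [← h]; ring
    rw [this]
    simp only [x, w]
    ring

/-- A form of degree `d` vanishing on the cuspidal cubic is the cuspidal cubic times a form of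
degree `d - 3`. -/
lemma exists_eq_cusp_mul {F : MvPolynomial (Fin 3) K} {d : ℕ} (hF : F.IsHomogeneous d)
    (h0 : restr K F = 0) : ∃ G : MvPolynomial (Fin 3) K,
      G.IsHomogeneous (d - 3) ∧ F = cusp K * G := by
  have key : ∀ s : Fin 3 →₀ ℕ, ∃ G : MvPolynomial (Fin 3) K,
      s.degree = d → G.IsHomogeneous (d - 3) ∧
        monomial s 1 - lift K d (Polynomial.X ^ (s 0 + 3 * s 1)) = cusp K * G := by
    intro s
    obtain ⟨G, hG, hE⟩ := division_monomial (K := K) (s 0) (s 1) (s 2)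
    refine ⟨G, fun hs => ?_⟩
    rw [← degree_eq_add, hs] at hG hE
    refine ⟨hG, ?_⟩
    rw [← hE, monomial_eq, Finsupp.prod_fintype _ _ (by simp), Fin.prod_univ_three]
    simp
  choose G hG using key
  have hdeg : ∀ s ∈ F.support, s.degree = d := fun s hs => by
    have := hF.degree_eq_sum_deg_support hs
    rw [Finsupp.degree_apply]; exact this.symm
  refine ⟨∑ s ∈ F.support, C (coeff s F) * G s, ?_, ?_⟩
  · exact IsHomogeneous.sum _ _ _ fun s hs => ((hG s (hdeg s hs)).1).C_mul _
  · have hl : lift K d (restr K F) = ∑ s ∈ F.support,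
        C (coeff s F) * lift K d (Polynomial.X ^ (s 0 + 3 * s 1)) := by
      rw [restr_eq_sum, map_sum]
      refine Finset.sum_congr rfl fun s _ => ?_
      rw [← Polynomial.smul_eq_C_mul, map_smul, smul_eq_C_mul]
    calc F = F - lift K d (restr K F) := by rw [h0]; simp
      _ = ∑ s ∈ F.support, (C (coeff s F) * monomial s 1 -
            C (coeff s F) * lift K d (Polynomial.X ^ (s 0 + 3 * s 1))) := by
          rw [Finset.sum_sub_distrib, ← hl]
          congr 1
          conv_lhs => rw [F.as_sum]
          refine Finset.sum_congr rfl fun s _ => ?_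
          rw [C_mul_monomial, mul_one]
      _ = _ := by
          rw [Finset.mul_sum]
          refine Finset.sum_congr rfl fun s hs => ?_
          rw [← mul_sub, (hG s (hdeg s hs)).2]; ring

/-- The restriction of the form to the cuspidal cubic has at most `3d` roots, and if it has exactly
`3d`, their sum is zero; this is impossible for positive multiples of the parameters `1, …, 9`. -/
lemma restr_eq_zero [CharZero K] {F : MvPolynomial (Fin 3) K} {d : ℕ} (hd : 1 ≤ d)
    (hF : F.IsHomogeneous d) (m : Fin 9 → ℕ)
    (hm : ∀ i : Fin 9, MultAtLeastVec F (cuspPt ((((i : ℕ) + 1 : ℕ)) : K)) (m i))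
    (hs : 3 * d ≤ ∑ i, m i) : restr K F = 0 := by
  set t : Fin 9 → K := fun i => (((i : ℕ) + 1 : ℕ) : K) with ht
  have htinj : Function.Injective t := by
    intro i j h
    have := Nat.cast_injective (R := K) h
    exact Fin.ext (by omega)
  set P : Polynomial K := ∏ i, (Polynomial.X - Polynomial.C (t i)) ^ (m i) with hP
  have hmon : ∀ i ∈ Finset.univ,
      ((Polynomial.X - Polynomial.C (t i)) ^ (m i)).Monic :=
    fun i _ => (Polynomial.monic_X_sub_C _).pow _
  have hPm : P.Monic := Polynomial.monic_prod_of_monic _ _ hmon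
  have hPd : P.natDegree = ∑ i, m i := by
    rw [hP, Polynomial.natDegree_prod_of_monic _ _ hmon]
    refine Finset.sum_congr rfl fun i _ => ?_
    rw [(Polynomial.monic_X_sub_C _).natDegree_pow, Polynomial.natDegree_X_sub_C, mul_one]
  have hPn : P.nextCoeff = ∑ i, m i • (- t i) := by
    rw [hP, Polynomial.Monic.nextCoeff_prod _ _ hmon]
    refine Finset.sum_congr rfl fun i _ => ?_
    rw [(Polynomial.monic_X_sub_C _).nextCoeff_pow, Polynomial.nextCoeff_X_sub_C]
  have hdvd : P ∣ restr K F := by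
    refine Finset.prod_dvd_of_coprime (fun i _ j _ hij => ?_)
      fun i _ => pow_dvd_restr _ _ _ (hm i)
    exact (Polynomial.pairwise_coprime_X_sub_C htinj hij).pow
  obtain ⟨g, hg⟩ := hdvd
  by_contra hne
  have hg0 : g ≠ 0 := by rintro rfl; exact hne (by rw [hg, mul_zero])
  have hdeg := natDegree_restr_le hF
  rw [hg, hPm.natDegree_mul' hg0, hPd] at hdeg
  have hgd : g.natDegree = 0 := by omega
  have hsum : ∑ i, m i = 3 * d := by omega
  have hco := coeff_restr hd hF
  rw [hg, Polynomial.eq_C_of_natDegree_eq_zero hgd, Polynomial.coeff_mul_C] at hco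
  rw [Polynomial.eq_C_of_natDegree_eq_zero hgd, Ne, Polynomial.C_eq_zero] at hg0
  have hP0 : P.coeff (3 * d - 1) = 0 := (mul_eq_zero.mp hco).resolve_right hg0
  rw [← hsum, ← hPd, ← Polynomial.nextCoeff_of_natDegree_pos (by omega), hPn] at hP0
  have hcast : ((∑ i : Fin 9, m i * ((i : ℕ) + 1) : ℕ) : K) = 0 := by
    rw [← neg_eq_zero, ← hP0]
    push_cast [ht]
    rw [← Finset.sum_neg_distrib]
    refine Finset.sum_congr rfl fun i _ => ?_
    rw [nsmul_eq_mul]; ring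
  have hnat : ∑ i : Fin 9, m i * ((i : ℕ) + 1) = 0 := by exact_mod_cast hcast
  have hle : ∑ i, m i ≤ ∑ i : Fin 9, m i * ((i : ℕ) + 1) :=
    Finset.sum_le_sum fun i _ => Nat.le_mul_of_pos_right _ (Nat.succ_pos _)
  omega

/-- At the nine points of the cuspidal cubic with parameters `1, …, 9`, no positive combination of
which vanishes, the only forms of degree `d` with total multiplicity at least `3d` are the
multiples of powers of the cuspidal cubic. -/
lemma eq_cusp_pow [CharZero K] (d : ℕ) : ∀ (F : MvPolynomial (Fin 3) K) (m : Fin 9 → ℕ),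
    F.IsHomogeneous d →
    (∀ i : Fin 9, MultAtLeastVec F (cuspPt ((((i : ℕ) + 1 : ℕ)) : K)) (m i)) →
    3 * d ≤ ∑ i, m i →
    F = 0 ∨ (∀ i, 3 * m i = d) ∧ ∃ c : K, F = C c * cusp K ^ (d / 3) := by
  induction d using Nat.strong_induction_on with
  | _ d ih =>
    intro F m hF hm hs
    rcases Nat.eq_zero_or_pos d with rfl | hd
    · have hFc := totalDegree_eq_zero_iff_eq_C.mp (Nat.le_zero.mp hF.totalDegree_le)
      by_cases hm0 : ∀ i, 3 * m i = 0
      · exact Or.inr ⟨hm0, _, by simpa using hFc⟩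
      · push Not at hm0
        obtain ⟨i, hi⟩ := hm0
        have h1 := multAtLeastVec_one.mp (multAtLeastVec_mono (hm i) (m := 1) (by omega))
        rw [hFc, eval_C] at h1
        exact Or.inl (by rw [hFc, h1, C_0])
    · obtain ⟨G, hG, hFG⟩ := exists_eq_cusp_mul hF (restr_eq_zero hd hF m hm hs)
      by_cases hF0 : F = 0
      · exact Or.inl hF0
      have hd3 : 3 + (d - 3) = d :=
        IsHomogeneous.inj_right (hFG ▸ cusp_homog.mul hG) hF hF0
      have hsm : ∀ t : K, eval (cuspPt t) (pderiv 1 (cusp K)) ≠ 0 := by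
        intro t
        simp [cusp, cuspPt, pderiv_X]
      have hGm : ∀ i : Fin 9,
          MultAtLeastVec G (cuspPt ((((i : ℕ) + 1 : ℕ)) : K)) (m i - 1) := fun i =>
        multAtLeastVec_of_mul 1 (hsm _) (hFG ▸ hm i)
      have hsum : ∑ i, m i ≤ ∑ i, (m i - 1) + 9 := by
        calc ∑ i, m i ≤ ∑ i : Fin 9, ((m i - 1) + 1) :=
              Finset.sum_le_sum fun i _ => by omega
          _ = _ := by rw [Finset.sum_add_distrib]; simp
      rcases ih (d - 3) (by omega) G (fun i => m i - 1) hG hGm (by omega) with h | ⟨h, c, hc⟩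
      · exact absurd (by rw [hFG, h, mul_zero]) hF0
      · right
        refine ⟨?_, c, ?_⟩
        · by_contra! hne
          obtain ⟨i, hi⟩ := hne
          have hi2 := h i
          -- the truncated subtraction forces `m i = 0` and `d = 3`, so every `m j ≤ 1`
          have hlt : ∑ j, m j < ∑ j : Fin 9, 1 :=
            Finset.sum_lt_sum (fun j _ => by have := h j; omega)
              ⟨i, Finset.mem_univ _, by omega⟩
          simp at hlt
          omega
        · rw [hFG, hc, show d / 3 = (d - 3) / 3 + 1 by omega, pow_succ]; ring

end Cusp

/-! ### Open conditions on nine points -/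

section Generic

variable {K : Type} [Field K]

/-- The multigrading on polynomials in nine groups of three variables. -/
def wt : Fin 9 × Fin 3 → (Fin 9 → ℕ) := fun q => Pi.single q.1 1

/-- A property of nine vectors of `K³` that holds where some nonzero multihomogeneous polynomial
does not vanish. -/
def Gen (P : (Fin 9 × Fin 3 → K) → Prop) : Prop :=
  ∃ (G : MvPolynomial (Fin 9 × Fin 3) K) (n : Fin 9 → ℕ),
    IsWeightedHomogeneous wt G n ∧ G ≠ 0 ∧ ∀ x, eval x G ≠ 0 → P x

lemma Gen.mono {P Q : (Fin 9 × Fin 3 → K) → Prop} (h : Gen P) (hPQ : ∀ x, P x → Q x) : Gen Q := by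
  obtain ⟨G, n, h1, h2, h3⟩ := h
  exact ⟨G, n, h1, h2, fun x hx => hPQ x (h3 x hx)⟩

lemma Gen.all {ι : Type} [Finite ι] {P : ι → (Fin 9 × Fin 3 → K) → Prop}
    (h : ∀ i, Gen (P i)) : Gen (fun x => ∀ i, P i x) := by
  have := Fintype.ofFinite ι
  choose G n h1 h2 h3 using h
  refine ⟨∏ i, G i, ∑ i, n i, IsWeightedHomogeneous.prod _ _ _ fun i _ => h1 i,
    Finset.prod_ne_zero_iff.mpr fun i _ => h2 i, fun x hx i => h3 i x fun h0 => hx ?_⟩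
  rw [map_prod]
  exact Finset.prod_eq_zero (Finset.mem_univ i) h0

lemma Gen.and {P Q : (Fin 9 × Fin 3 → K) → Prop} (hP : Gen P) (hQ : Gen Q) :
    Gen (fun x => P x ∧ Q x) := by
  have := Gen.all (P := fun b : Bool => if b then P else Q) (by
    intro b; cases b
    · simpa using hQ
    · simpa using hP)
  exact this.mono fun x hx => ⟨by simpa using hx true, by simpa using hx false⟩

lemma support_of_weighted {G : MvPolynomial (Fin 9 × Fin 3) K} {n : Fin 9 → ℕ}
    (h : IsWeightedHomogeneous wt G n) (m) (hm : m ∈ G.support) (i : Fin 9) :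
    ∑ j : Fin 3, m (i, j) = n i := by
  have := congrFun (h (mem_support_iff.mp hm)) i
  rw [← this, Finsupp.weight_apply, Finsupp.sum_fintype _ _ (by simp), Fintype.sum_prod_type,
    Finset.sum_apply]
  simp [wt, Finset.sum_apply, Pi.single_apply]

lemma weighted_rename {P : MvPolynomial (Fin 3) K} {d : ℕ} (h : P.IsHomogeneous d) (i : Fin 9) :
    IsWeightedHomogeneous wt (rename (fun j => (i, j)) P : MvPolynomial (Fin 9 × Fin 3) K)
      (Pi.single i d) := by
  intro m hm
  obtain ⟨u, rfl, hu⟩ := coeff_rename_ne_zero _ _ _ hm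
  have h1 := h.degree_eq_sum_deg_support (mem_support_iff.mpr hu)
  have h2 := degree_eq_add u
  rw [Finsupp.degree_apply, ← h1] at h2
  rw [Finsupp.weight_apply, Finsupp.sum_mapDomain_index (by simp) (by intros; rw [add_smul]),
    Finsupp.sum_fintype _ _ (by simp), Fin.sum_univ_three]
  ext k
  simp only [wt, Pi.add_apply, Pi.smul_apply, Pi.single_apply, smul_eq_mul]
  split_ifs <;> omega

lemma weighted_det {N : Type} [Fintype N] [DecidableEq N]
    (M : Matrix N N (MvPolynomial (Fin 9 × Fin 3) K)) (w : N → (Fin 9 → ℕ))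
    (h : ∀ a b, IsWeightedHomogeneous wt (M a b) (w a)) :
    IsWeightedHomogeneous wt M.det (∑ a, w a) := by
  rw [← Matrix.det_transpose, Matrix.det_apply]
  refine IsWeightedHomogeneous.sum _ _ _ fun σ _ => ?_
  have hp : IsWeightedHomogeneous wt (∏ a, M.transpose (σ a) a) (∑ a, w a) :=
    IsWeightedHomogeneous.prod _ _ _ fun a _ => h a (σ a)
  rcases Int.units_eq_one_or (Equiv.Perm.sign σ) with hs | hs <;> rw [hs]
  · simpa using hp
  · simpa using hp.neg

/-- A family of linear functionals without common kernel contains a square invertible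
subsystem. -/
lemma exists_det_ne_zero {N ι : Type} [Fintype N] [DecidableEq N] (v : ι → N → K)
    (h : ∀ ξ : N → K, (∀ r, ∑ n, v r n * ξ n = 0) → ξ = 0) :
    ∃ f : N → ι, (Matrix.of fun a b => v (f a) b).det ≠ 0 := by
  have hspan : Submodule.span K (Set.range v) = ⊤ := by
    by_contra hne
    obtain ⟨φ, hφ, hle⟩ := Submodule.exists_le_ker_of_lt_top _ (lt_top_iff_ne_top.mpr hne)
    refine hφ (LinearMap.pi_ext' fun n => LinearMap.ext_ring ?_)
    have hφv : ∀ u : N → K, φ u = ∑ n, u n * φ (Pi.single n 1) := by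
      intro u
      conv_lhs => rw [pi_eq_sum_univ' u]
      simp only [map_sum, map_smul, smul_eq_mul]
    have := h (fun n => φ (Pi.single n 1)) fun r => by
      rw [← hφv]
      exact hle (Submodule.subset_span ⟨r, rfl⟩)
    exact congrFun this n
  obtain ⟨b, hb, hbs, hli⟩ := exists_linearIndependent K (Set.range v)
  let B := Module.Basis.mk hli (by rw [Subtype.range_coe, hbs, hspan])
  let e : N ≃ b := (Pi.basisFun K N).indexEquiv B
  choose f hf using fun a : N => hb (e a).2
  refine ⟨f, ?_⟩
  have hrow : LinearIndependent K (fun a => v (f a)) := by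
    have h1 := hli.comp e e.injective
    rw [show (fun a => v (f a)) = Subtype.val ∘ e from funext hf]
    exact h1
  exact ((Matrix.isUnit_iff_isUnit_det _).mp
    (Matrix.linearIndependent_rows_iff_isUnit.mp hrow)).ne_zero

/-- Triviality of the common kernel of linear functionals depending multihomogeneously on the
points is an open condition. -/
lemma gen_of_kernel {N ι : Type} [Fintype N] [DecidableEq N]
    (A : ι → N → MvPolynomial (Fin 9 × Fin 3) K) (w : ι → (Fin 9 → ℕ))
    (hA : ∀ r n, IsWeightedHomogeneous wt (A r n) (w r)) (x₀ : Fin 9 × Fin 3 → K)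
    (h : ∀ ξ : N → K, (∀ r, ∑ n, eval x₀ (A r n) * ξ n = 0) → ξ = 0) :
    Gen (fun x => ∀ ξ : N → K, (∀ r, ∑ n, eval x (A r n) * ξ n = 0) → ξ = 0) := by
  obtain ⟨f, hf⟩ := exists_det_ne_zero (fun r n => eval x₀ (A r n)) h
  have hev : ∀ x, eval x (Matrix.of fun a b => A (f a) b).det =
      (Matrix.of fun a b => eval x (A (f a) b)).det := fun x => RingHom.map_det _ _
  refine ⟨(Matrix.of fun a b => A (f a) b).det, _,
    weighted_det _ (fun a => w (f a)) (fun a b => hA _ _), ?_, ?_⟩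
  · intro h0
    rw [← hev, h0, map_zero] at hf
    exact hf rfl
  · intro x hx ξ hξ
    rw [hev] at hx
    exact Matrix.eq_zero_of_mulVec_eq_zero hx (funext fun a => hξ (f a))

end Generic

/-! ### Coordinates on forms of given degree -/

section Forms

variable {K : Type} [Field K]

/-- Exponents of the ternary monomials of degree `d`. -/
abbrev Mon (d : ℕ) : Type := {s : Fin 3 → ℕ // s ∈ Finset.Nat.antidiagonalTuple 3 d}

/-- The exponent as a finitely supported function. -/
def Mon.exp {d : ℕ} (s : Mon d) : Fin 3 →₀ ℕ := Finsupp.equivFunOnFinite.symm s.1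

lemma Mon.degree_exp {d : ℕ} (s : Mon d) : s.exp.degree = d := by
  rw [Finsupp.degree_eq_sum]
  exact Finset.Nat.mem_antidiagonalTuple.mp s.2

lemma Mon.exp_injective {d : ℕ} : Function.Injective (Mon.exp (d := d)) :=
  fun _ _ h => Subtype.ext (Finsupp.equivFunOnFinite.symm.injective h)

lemma Mon.exists_exp {d : ℕ} (t : Fin 3 →₀ ℕ) (ht : t.degree = d) : ∃ s : Mon d, s.exp = t := by
  refine ⟨⟨t, ?_⟩, ?_⟩
  · rw [Finset.Nat.mem_antidiagonalTuple, ← Finsupp.degree_eq_sum, ht]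
  · ext; rfl

/-- The form of degree `d` with given coefficients. -/
def form {d : ℕ} (ξ : Mon d → K) : MvPolynomial (Fin 3) K := ∑ s, monomial s.exp (ξ s)

lemma form_homog {d : ℕ} (ξ : Mon d → K) : (form ξ).IsHomogeneous d :=
  IsHomogeneous.sum _ _ _ fun s _ => isHomogeneous_monomial _ s.degree_exp

lemma coeff_form {d : ℕ} (ξ : Mon d → K) (s : Mon d) : coeff s.exp (form ξ) = ξ s := by
  rw [form, coeff_sum, Finset.sum_eq_single s]
  · simp
  · intro t _ hts
    rw [coeff_monomial, if_neg fun h => hts (Mon.exp_injective h)]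
  · simp

lemma form_coeff {d : ℕ} {F : MvPolynomial (Fin 3) K} (hF : F.IsHomogeneous d) :
    form (fun s : Mon d => coeff s.exp F) = F := by
  ext t
  by_cases ht : t.degree = d
  · obtain ⟨s, rfl⟩ := Mon.exists_exp t ht
    rw [coeff_form]
  · rw [(form_homog _).coeff_eq_zero ht, hF.coeff_eq_zero ht]

lemma form_eq_zero {d : ℕ} {ξ : Mon d → K} (h : form ξ = 0) : ξ = 0 := by
  ext s
  rw [← coeff_form ξ s, h]; simp

lemma pderivs_add (l : List (Fin 3)) (F G : MvPolynomial (Fin 3) K) :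
    pderivs l (F + G) = pderivs l F + pderivs l G := by
  induction l with
  | nil => rfl
  | cons i l ih =>
    change pderiv i (pderivs l (F + G)) = pderiv i (pderivs l F) + pderiv i (pderivs l G)
    rw [ih, map_add]

lemma pderivs_C_mul (l : List (Fin 3)) (c : K) (F : MvPolynomial (Fin 3) K) :
    pderivs l (C c * F) = C c * pderivs l F := by
  induction l with
  | nil => rfl
  | cons i l ih =>
    change pderiv i (pderivs l (C c * F)) = C c * pderiv i (pderivs l F)
    rw [ih, pderiv_C_mul]

/-- `pderivs l` as a linear map. -/
def pderivsLin (K : Type) [Field K] (l : List (Fin 3)) :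
    MvPolynomial (Fin 3) K →ₗ[K] MvPolynomial (Fin 3) K where
  toFun := pderivs l
  map_add' := pderivs_add l
  map_smul' c F := by simp only [smul_eq_C_mul, pderivs_C_mul, RingHom.id_apply]

lemma pderivs_homog {n : ℕ} {F : MvPolynomial (Fin 3) K} (hF : F.IsHomogeneous n)
    (l : List (Fin 3)) : (pderivs l F).IsHomogeneous (n - l.length) := by
  induction l with
  | nil => exact hF
  | cons i l ih =>
    have := ih.pderiv (i := i)
    rwa [Nat.sub_sub] at this

lemma sum_eval_pderivs {d : ℕ} (l : List (Fin 3)) (v : Fin 3 → K) (ξ : Mon d → K) :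
    ∑ s, eval v (pderivs l (monomial s.exp 1)) * ξ s = eval v (pderivs l (form ξ)) := by
  have : pderivs l (form ξ) = ∑ s, pderivs l (monomial s.exp (ξ s)) :=
    map_sum (pderivsLin K l) _ _
  rw [this, map_sum]
  refine Finset.sum_congr rfl fun s _ => ?_
  rw [show monomial s.exp (ξ s) = C (ξ s) * monomial s.exp 1 by rw [C_mul_monomial, mul_one],
    pderivs_C_mul, map_mul, eval_C, mul_comm]

/-- The vector `(1, 0, 0)`, used to normalize forms up to a scalar. -/
def e₀ (K : Type) [Field K] : Fin 3 → K := ![1, 0, 0]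

/-- Indices of the linear conditions imposing multiplicities `m i`, together with one normalizing
condition when all `m i` equal `d / 3`. -/
abbrev MultIdx (d : ℕ) (m : Fin 9 → ℕ) : Type :=
  {r : Fin 9 × List (Fin 3) // r.2.length < m r.1} ⊕ PLift (∀ i, 3 * m i = d)

/-- The conditions `MultIdx d m` as linear forms in the coefficients of a form of degree `d`, with
coefficients polynomial in the nine points. -/
def multMat (K : Type) [Field K] (d : ℕ) (m : Fin 9 → ℕ) :
    MultIdx d m → Mon d → MvPolynomial (Fin 9 × Fin 3) K
  | .inl r, s => rename (fun j => (r.1.1, j)) (pderivs r.1.2 (monomial s.exp 1))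
  | .inr _, s => C (eval (e₀ K) (monomial s.exp 1))

/-- The multidegrees of the rows of `multMat`. -/
def multWt (d : ℕ) (m : Fin 9 → ℕ) : MultIdx d m → (Fin 9 → ℕ)
  | .inl r => Pi.single r.1.1 (d - r.1.2.length)
  | .inr _ => 0

lemma multMat_homog (d : ℕ) (m : Fin 9 → ℕ) (r : MultIdx d m) (s : Mon d) :
    IsWeightedHomogeneous wt (multMat K d m r s) (multWt d m r) := by
  rcases r with r | r
  · exact weighted_rename (pderivs_homog (isHomogeneous_monomial _ s.degree_exp) _) _
  · exact isWeightedHomogeneous_C _ _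

lemma multMat_inl (d : ℕ) (m : Fin 9 → ℕ) (x : Fin 9 × Fin 3 → K) (ξ : Mon d → K) (r) :
    ∑ s, eval x (multMat K d m (.inl r) s) * ξ s =
      eval (fun j => x (r.1.1, j)) (pderivs r.1.2 (form ξ)) := by
  rw [← sum_eval_pderivs]
  refine Finset.sum_congr rfl fun s _ => ?_
  rw [multMat, eval_rename, Function.comp_def]

lemma multMat_inr (d : ℕ) (m : Fin 9 → ℕ) (x : Fin 9 × Fin 3 → K) (ξ : Mon d → K) (r) :
    ∑ s, eval x (multMat K d m (.inr r) s) * ξ s = eval (e₀ K) (form ξ) := by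
  rw [form, map_sum]
  refine Finset.sum_congr rfl fun s _ => ?_
  rw [multMat, eval_C, eval_monomial, eval_monomial, one_mul, mul_comm]

/-- For a fixed degree and fixed multiplicities with total at least `3d`, forms of degree `d` with
these multiplicities at generic points form a space of dimension at most one, and of dimension
zero unless all multiplicities are `d / 3`. -/
lemma gen_mult [CharZero K] (d : ℕ) (m : Fin 9 → ℕ) (hs : 3 * d ≤ ∑ i, m i) :
    Gen (fun x : Fin 9 × Fin 3 → K => ∀ F : MvPolynomial (Fin 3) K, F.IsHomogeneous d →
      (∀ i, MultAtLeastVec F (fun j => x (i, j)) (m i)) →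
      ((∀ i, 3 * m i = d) → eval (e₀ K) F = 0) → F = 0) := by
  have hx₀ := gen_of_kernel (multMat K d m) (multWt d m) (multMat_homog d m)
    (fun q => cuspPt ((((q.1 : ℕ) + 1 : ℕ)) : K) q.2) (by
    intro ξ hξ
    apply form_eq_zero
    rcases eq_cusp_pow d (form ξ) m (form_homog ξ) (fun i l hl => by
      rw [← hξ (Sum.inl ⟨(i, l), hl⟩), multMat_inl]) hs with h | ⟨hm, c, hc⟩
    · exact h
    · have h0 := hξ (Sum.inr ⟨hm⟩)
      rw [multMat_inr, hc, map_mul, map_pow, eval_C] at h0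
      have h1 : eval (e₀ K) (cusp K) = -1 := by simp [cusp, e₀]
      rw [h1] at h0
      rw [hc, (mul_eq_zero.mp h0).resolve_right (pow_ne_zero _ (by simp)), C_0, zero_mul])
  refine hx₀.mono fun x hx F hF hm h0 => ?_
  have := hx (fun s => coeff s.exp F) (by
    rintro (r | r)
    · rw [multMat_inl, form_coeff hF]; exact hm _ _ r.2
    · rw [multMat_inr, form_coeff hF]; exact h0 r.down)
  rw [← form_coeff hF, this]
  simp [form]

end Forms

/-! ### A smooth cubic determined by nine of its points -/

section Weierstrass

variable {K : Type} [Field K]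

/-- The cubic `y² z = x³ + z³`. -/
def weier (K : Type) [Field K] : MvPolynomial (Fin 3) K := X 1 ^ 2 * X 2 - X 0 ^ 3 - X 2 ^ 3

/-- Nine points on `y² z = x³ + z³`, where `r² = 2` and `u² = 28`. -/
def weierPt (r u : K) : Fin 9 × Fin 3 → K := fun q =>
  (![![0, 1, 1], ![0, -1, 1], ![1, r, 1], ![1, -r, 1], ![2, 3, 1], ![2, -3, 1], ![3, u, 1],
    ![3, -u, 1], ![-1, 0, 1]] : Fin 9 → Fin 3 → K) q.1 q.2

lemma eval_cubic {F : MvPolynomial (Fin 3) K} (hF : F.IsHomogeneous 3) :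
    ∃ a : Fin 10 → K, ∀ v : Fin 3 → K, eval v F =
      a 0 * v 0 ^ 3 + a 1 * (v 0 ^ 2 * v 1) + a 2 * (v 0 ^ 2 * v 2) + a 3 * (v 0 * v 1 ^ 2) +
      a 4 * (v 0 * v 1 * v 2) + a 5 * (v 0 * v 2 ^ 2) + a 6 * v 1 ^ 3 + a 7 * (v 1 ^ 2 * v 2) +
      a 8 * (v 1 * v 2 ^ 2) + a 9 * v 2 ^ 3 := by
  let b : (Fin 3 → ℕ) → K := fun s => coeff (Finsupp.equivFunOnFinite.symm s) F
  refine ⟨![b ![3, 0, 0], b ![2, 1, 0], b ![2, 0, 1], b ![1, 2, 0], b ![1, 1, 1], b ![1, 0, 2],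
    b ![0, 3, 0], b ![0, 2, 1], b ![0, 1, 2], b ![0, 0, 3]], fun v => ?_⟩
  have h1 : eval v F = ∑ s ∈ Finset.Nat.antidiagonalTuple 3 3,
      b s * (v 0 ^ s 0 * v 1 ^ s 1 * v 2 ^ s 2) := by
    conv_lhs => rw [← form_coeff hF]
    rw [← Finset.sum_coe_sort, form, map_sum]
    refine Finset.sum_congr rfl fun s _ => ?_
    rw [eval_monomial, Finsupp.prod_fintype _ _ (by simp), Fin.prod_univ_three]
    rfl
  have h2 : Finset.Nat.antidiagonalTuple 3 3 = {![3, 0, 0], ![2, 1, 0], ![2, 0, 1], ![1, 2, 0],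
    ![1, 1, 1], ![1, 0, 2], ![0, 3, 0], ![0, 2, 1], ![0, 1, 2], ![0, 0, 3]} := by decide
  rw [h1, h2]
  repeat rw [Finset.sum_insert (by decide)]
  rw [Finset.sum_singleton]
  simp
  ring

/-- A polynomial of degree at most four with five roots is zero. -/
lemma quartic_zero [CharZero K] {c₀ c₁ c₂ c₃ c₄ : K}
    (h : ∀ x ∈ ({-1, 0, 1, 2, 3} : Set K), c₀ + c₁ * x + c₂ * x ^ 2 + c₃ * x ^ 3 + c₄ * x ^ 4 = 0) :
    c₀ = 0 ∧ c₁ = 0 ∧ c₂ = 0 ∧ c₃ = 0 ∧ c₄ = 0 := by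
  have e1 := h (-1) (by simp)
  have e2 := h 0 (by simp)
  have e3 := h 1 (by simp)
  have e4 := h 2 (by simp)
  have e5 := h 3 (by simp)
  have h0 : c₀ = 0 := by linear_combination e2
  have h4 : c₄ = 0 := by
    linear_combination (1 / 24) * e1 - (4 / 24) * e2 + (6 / 24) * e3 - (4 / 24) * e4 +
      (1 / 24) * e5
  have h3 : c₃ = 0 := by
    linear_combination (1 / 6) * e5 - (3 / 6) * e4 + (3 / 6) * e3 - (1 / 6) * e2 - 6 * h4
  have h2 : c₂ = 0 := by
    linear_combination (1 / 2) * e4 - e3 + (1 / 2) * e2 - 3 * h3 - 7 * h4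
  exact ⟨h0, by linear_combination e3 - h0 - h2 - h3 - h4, h2, h3, h4⟩

/-- The curve `y² z = x³ + z³` is the only cubic through the nine points `weierPt r u`. -/
lemma eq_weier [CharZero K] {r u : K} (hr : r ^ 2 = 2) (hu : u ^ 2 = 28)
    {F : MvPolynomial (Fin 3) K} (hF : F.IsHomogeneous 3)
    (h : ∀ i, eval (fun j => weierPt r u (i, j)) F = 0) : ∃ c, F = C c * weier K := by
  obtain ⟨a, ha⟩ := eval_cubic hF
  have hr0 : r ≠ 0 := by rintro rfl; norm_num at hr
  have hu0 : u ≠ 0 := by rintro rfl; norm_num at hu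
  -- The form restricted to `z = 1` and `y² = x³ + 1` is `A(x) + y B(x)`.
  have key : ∀ x y : K, y ≠ 0 → y ^ 2 = x ^ 3 + 1 → eval ![x, y, 1] F = 0 →
      eval ![x, -y, 1] F = 0 →
      (a 9 + a 7) + (a 5 + a 3) * x + a 2 * x ^ 2 + (a 0 + a 7) * x ^ 3 + a 3 * x ^ 4 = 0 ∧
      (a 8 + a 6) + a 4 * x + a 1 * x ^ 2 + a 6 * x ^ 3 = 0 := by
    intro x y hy hxy h1 h2
    rw [ha] at h1 h2
    simp only [Matrix.cons_val] at h1 h2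
    refine ⟨?_, mul_left_cancel₀ hy ?_⟩
    · linear_combination (1 / 2) * h1 + (1 / 2) * h2 - (a 3 * x + a 7) * hxy
    · linear_combination (1 / 2) * h1 - (1 / 2) * h2 - (a 6 * y) * hxy
  have hpt : ∀ i, eval ((![![0, 1, 1], ![0, -1, 1], ![1, r, 1], ![1, -r, 1], ![2, 3, 1],
      ![2, -3, 1], ![3, u, 1], ![3, -u, 1], ![-1, 0, 1]] : Fin 9 → Fin 3 → K) i) F = 0 := h
  obtain ⟨A0, B0⟩ := key 0 1 one_ne_zero (by norm_num) (hpt 0) (hpt 1)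
  obtain ⟨A1, B1⟩ := key 1 r hr0 (by rw [hr]; norm_num) (hpt 2) (hpt 3)
  obtain ⟨A2, B2⟩ := key 2 3 (by norm_num) (by norm_num) (hpt 4) (hpt 5)
  obtain ⟨A3, B3⟩ := key 3 u hu0 (by rw [hu]; norm_num) (hpt 6) (hpt 7)
  have h8 := hpt 8
  rw [ha] at h8
  simp only [Matrix.cons_val] at h8
  obtain ⟨k0, k1, k2, k3, k4⟩ := quartic_zero (c₀ := a 9 + a 7) (c₁ := a 5 + a 3) (c₂ := a 2)
    (c₃ := a 0 + a 7) (c₄ := a 3) (by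
      simp only [Set.mem_insert_iff, Set.mem_singleton_iff, forall_eq_or_imp, forall_eq]
      exact ⟨by linear_combination h8, A0, A1, A2, A3⟩)
  have l6 : a 6 = 0 := by
    linear_combination (1 / 6) * B3 - (3 / 6) * B2 + (3 / 6) * B1 - (1 / 6) * B0
  have l1 : a 1 = 0 := by
    linear_combination (1 / 2) * B2 - B1 + (1 / 2) * B0 - 3 * l6
  have l8 : a 8 = 0 := by linear_combination B0 - l6
  have l4 : a 4 = 0 := by linear_combination B1 - B0 - l1 - l6
  refine ⟨a 7, funext fun v => ?_⟩
  rw [ha]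
  simp only [weier, map_mul, map_sub, map_pow, eval_C, eval_X]
  linear_combination k0 * v 2 ^ 3 + (k1 - k4) * (v 0 * v 2 ^ 2) + k2 * (v 0 ^ 2 * v 2) +
    k3 * v 0 ^ 3 + k4 * (v 0 * v 1 ^ 2) + l6 * v 1 ^ 3 + l1 * (v 0 ^ 2 * v 1) +
    l8 * (v 1 * v 2 ^ 2) + l4 * (v 0 * v 1 * v 2)

lemma eval_weier : eval (e₀ K) (weier K) = -1 := by simp [weier, e₀]

end Weierstrass

/-! ### The cubic through nine points as a polynomial in the points -/

section Interpolation

variable {K : Type} [Field K]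

/-- The ten cubic monomials, indexed by the nine points and the normalizing condition. -/
def monEquiv : Mon 3 ≃ Option (Fin 9) := Fintype.equivOfCardEq (by decide)

/-- Evaluation of the cubic monomials at nine points and at `e₀`. -/
def interpMat (K : Type) [Field K] :
    Matrix (Option (Fin 9)) (Option (Fin 9)) (MvPolynomial (Fin 9 × Fin 3) K)
  | some i, b => rename (fun j => (i, j)) (monomial (monEquiv.symm b).exp 1)
  | none, b => C (eval (e₀ K) (monomial (monEquiv.symm b).exp 1))

/-- The multidegrees of the rows of `interpMat`. -/
def interpWt : Option (Fin 9) → (Fin 9 → ℕ)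
  | some i => Pi.single i 3
  | none => 0

lemma interpMat_homog (a b) : IsWeightedHomogeneous wt (interpMat K a b) (interpWt a) := by
  rcases a with _ | i
  · exact isWeightedHomogeneous_C _ _
  · exact weighted_rename (isHomogeneous_monomial _ (Mon.degree_exp _)) _

/-- The coefficients of the cubic through nine points. -/
def cubicCoeff (K : Type) [Field K] (s : Mon 3) : MvPolynomial (Fin 9 × Fin 3) K :=
  (interpMat K).adjugate (monEquiv s) none

lemma cubicCoeff_homog (s : Mon 3) :
    IsWeightedHomogeneous wt (cubicCoeff K s) (∑ a, interpWt a) := by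
  rw [cubicCoeff, Matrix.adjugate_apply]
  refine weighted_det _ _ fun a b => ?_
  rcases a with _ | i
  · rw [Matrix.updateRow_self, Pi.single_apply]
    split_ifs
    · exact isWeightedHomogeneous_one _ _
    · exact isWeightedHomogeneous_zero _ _ _
  · rw [Matrix.updateRow_ne (by simp)]
    exact interpMat_homog _ _

/-- The cubic through nine points, given by polynomials in the points. -/
def cubicThrough (x : Fin 9 × Fin 3 → K) : MvPolynomial (Fin 3) K :=
  form fun s => eval x (cubicCoeff K s)

lemma sum_interpMat_some (x : Fin 9 × Fin 3 → K) (ξ : Mon 3 → K) (i : Fin 9) :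
    ∑ b, eval x (interpMat K (some i) b) * ξ (monEquiv.symm b) =
      eval (fun j => x (i, j)) (form ξ) := by
  rw [← monEquiv.sum_comp, form, map_sum]
  refine Finset.sum_congr rfl fun s _ => ?_
  rw [interpMat, eval_rename, Function.comp_def, Equiv.symm_apply_apply, eval_monomial,
    eval_monomial, one_mul, mul_comm]

lemma sum_interpMat_none (x : Fin 9 × Fin 3 → K) (ξ : Mon 3 → K) :
    ∑ b, eval x (interpMat K none b) * ξ (monEquiv.symm b) = eval (e₀ K) (form ξ) := by
  rw [← monEquiv.sum_comp, form, map_sum]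
  refine Finset.sum_congr rfl fun s _ => ?_
  rw [interpMat, eval_C, Equiv.symm_apply_apply, eval_monomial, eval_monomial, one_mul, mul_comm]

lemma sum_interpMat_cubicCoeff (x : Fin 9 × Fin 3 → K) (a : Option (Fin 9)) :
    ∑ b, eval x (interpMat K a b) * eval x (cubicCoeff K (monEquiv.symm b)) =
      if a = none then eval x (interpMat K).det else 0 := by
  have h := congrFun (congrFun (Matrix.mul_adjugate (interpMat K)) a) none
  rw [Matrix.mul_apply, Matrix.smul_apply, Matrix.one_apply, smul_eq_mul] at h
  have h' := congrArg (eval x) h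
  rw [map_sum] at h'
  simp only [map_mul] at h'
  simp only [cubicCoeff, Equiv.apply_symm_apply]
  rw [h']
  split_ifs <;> simp

lemma eval_cubicThrough (x : Fin 9 × Fin 3 → K) (i : Fin 9) :
    eval (fun j => x (i, j)) (cubicThrough x) = 0 := by
  rw [cubicThrough, ← sum_interpMat_some, sum_interpMat_cubicCoeff]
  simp

lemma eval_e₀_cubicThrough (x : Fin 9 × Fin 3 → K) :
    eval (e₀ K) (cubicThrough x) = eval x (interpMat K).det := by
  rw [cubicThrough, ← sum_interpMat_none x, sum_interpMat_cubicCoeff]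
  simp

/-- The interpolation problem at the nine points `weierPt r u` has a one-dimensional solution
space, on which evaluation at `e₀` is injective. -/
lemma det_weierPt_ne_zero [CharZero K] {r u : K} (hr : r ^ 2 = 2) (hu : u ^ 2 = 28) :
    eval (weierPt r u) (interpMat K).det ≠ 0 := by
  rw [RingHom.map_det]
  intro h0
  obtain ⟨ξ, hξ, hM⟩ := Matrix.exists_mulVec_eq_zero_iff.mpr h0
  have hM' : ∀ a, ∑ b, eval (weierPt r u) (interpMat K a b) * ξ (monEquiv (monEquiv.symm b)) = 0 :=
    fun a => by
      simp only [Equiv.apply_symm_apply]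
      exact congrFun hM a
  obtain ⟨c, hc⟩ := eq_weier hr hu (form_homog fun s => ξ (monEquiv s)) fun i => by
    rw [← sum_interpMat_some]; exact hM' _
  have h1 : eval (e₀ K) (form fun s => ξ (monEquiv s)) = 0 := by
    rw [← sum_interpMat_none (weierPt r u)]; exact hM' _
  rw [hc, map_mul, eval_C, eval_weier] at h1
  have hc0 : c = 0 := by simpa using h1
  rw [hc0, C_0, zero_mul] at hc
  have h2 := form_eq_zero hc
  refine hξ (_root_.funext fun b => ?_)
  have := congrFun h2 (monEquiv.symm b)
  simpa using this

/-- By `eval_e₀_cubicThrough`, the cubic through nine generic points does not vanish at `e₀`. -/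
lemma gen_det [IsAlgClosed K] [CharZero K] :
    Gen fun x : Fin 9 × Fin 3 → K => eval x (interpMat K).det ≠ 0 := by
  obtain ⟨r, hr⟩ := IsAlgClosed.exists_pow_nat_eq (2 : K) (n := 2) (by norm_num)
  obtain ⟨u, hu⟩ := IsAlgClosed.exists_pow_nat_eq (28 : K) (n := 2) (by norm_num)
  refine ⟨(interpMat K).det, _, weighted_det _ _ interpMat_homog, ?_, fun _ h => h⟩
  intro h0
  apply det_weierPt_ne_zero hr hu
  rw [h0, map_zero]

/-- The products of partial derivatives of the cubic with quadratic monomials, as linear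
functionals on the dual of the space of quartic forms. -/
def jacMat (K : Type) [Field K] (r : Fin 3 × Mon 2) (s : Mon 4) :
    MvPolynomial (Fin 9 × Fin 3) K :=
  ∑ c : Mon 3, cubicCoeff K c *
    C (coeff s.exp (monomial r.2.exp 1 * pderiv r.1 (monomial c.exp (1 : K))))

lemma jacMat_homog (r : Fin 3 × Mon 2) (s : Mon 4) :
    IsWeightedHomogeneous wt (jacMat K r s) (∑ a, interpWt a) := by
  refine IsWeightedHomogeneous.sum _ _ _ fun c _ => ?_
  have := (cubicCoeff_homog c).mul (isWeightedHomogeneous_C wt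
    (coeff s.exp (monomial r.2.exp 1 * pderiv r.1 (monomial c.exp (1 : K)))))
  rwa [add_zero] at this

lemma eval_jacMat (x : Fin 9 × Fin 3 → K) (r : Fin 3 × Mon 2) (s : Mon 4) :
    eval x (jacMat K r s) =
      coeff s.exp (monomial r.2.exp 1 * pderiv r.1 (cubicThrough x)) := by
  rw [jacMat, cubicThrough, form, map_sum, map_sum, Finset.mul_sum, coeff_sum]
  refine Finset.sum_congr rfl fun c _ => ?_
  rw [show monomial c.exp (eval x (cubicCoeff K c)) =
    C (eval x (cubicCoeff K c)) * monomial c.exp 1 by rw [C_mul_monomial, mul_one],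
    pderiv_C_mul, mul_left_comm, coeff_C_mul, map_mul, eval_C]

/-- The quadratic multiples of the partial derivatives of `y² z - x³ - z³` span all quartics. -/
lemma jac_weier [CharZero K] (ξ : Mon 4 → K)
    (h : ∀ i (t : Mon 2), ∑ s : Mon 4,
      coeff s.exp (monomial t.exp 1 * pderiv i (weier K)) * ξ s = 0) : ξ = 0 := by
  let L : MvPolynomial (Fin 3) K →ₗ[K] K := ∑ s : Mon 4, ξ s • lcoeff K s.exp
  have hL : ∀ P, L P = ∑ s : Mon 4, coeff s.exp P * ξ s := fun P => by
    simp [L, mul_comm]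
  let ℓ : ℕ → ℕ → ℕ → K := fun a b c => L (X 0 ^ a * X 1 ^ b * X 2 ^ c)
  have hmon : ∀ (t : Fin 3 →₀ ℕ), (monomial t 1 : MvPolynomial (Fin 3) K) =
      X 0 ^ t 0 * X 1 ^ t 1 * X 2 ^ t 2 := fun t => by
    rw [monomial_eq, C_1, one_mul, Finsupp.prod_fintype _ _ (by simp), Fin.prod_univ_three]
  have h' : ∀ i a b c, a + b + c = 2 → L (X 0 ^ a * X 1 ^ b * X 2 ^ c * pderiv i (weier K)) = 0 := by
    intro i a b c habc
    obtain ⟨t, ht⟩ := Mon.exists_exp (d := 2) (Finsupp.equivFunOnFinite.symm ![a, b, c]) (by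
      rw [degree_eq_add]; simpa using habc)
    have := h i t
    rw [← hL, hmon, ht] at this
    simpa using this
  have C2 : (C 2 : MvPolynomial (Fin 3) K) = 2 := map_ofNat C 2
  have C3 : (C 3 : MvPolynomial (Fin 3) K) = 3 := map_ofNat C 3
  have d0 : pderiv 0 (weier K) = (-3 : K) • X 0 ^ 2 := by
    simp [weier, pderiv_X, smul_eq_C_mul, Derivation.leibniz, Derivation.leibniz_pow, C3]
  have d1 : pderiv 1 (weier K) = (2 : K) • (X 1 * X 2) := by
    simp [weier, pderiv_X, smul_eq_C_mul, Derivation.leibniz, Derivation.leibniz_pow, C2]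
    ring
  have d2 : pderiv 2 (weier K) = X 1 ^ 2 - (3 : K) • X 2 ^ 2 := by
    simp [weier, pderiv_X, smul_eq_C_mul, Derivation.leibniz, Derivation.leibniz_pow, C3]
  have r0 : ∀ a b c, a + b + c = 2 → ℓ (a + 2) b c = 0 := by
    intro a b c hs
    have := h' 0 a b c hs
    rw [d0, mul_smul_comm, map_smul, smul_eq_mul] at this
    rw [← (mul_eq_zero.mp this).resolve_left (by norm_num)]
    exact congrArg L (by ring)
  have r1 : ∀ a b c, a + b + c = 2 → ℓ a (b + 1) (c + 1) = 0 := by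
    intro a b c hs
    have := h' 1 a b c hs
    rw [d1, mul_smul_comm, map_smul, smul_eq_mul] at this
    rw [← (mul_eq_zero.mp this).resolve_left (by norm_num)]
    exact congrArg L (by ring)
  have r2 : ∀ a b c, a + b + c = 2 → ℓ a (b + 2) c = 3 * ℓ a b (c + 2) := by
    intro a b c hs
    have := h' 2 a b c hs
    rw [d2, mul_sub, mul_smul_comm, map_sub, map_smul, smul_eq_mul, sub_eq_zero] at this
    have e1 : ℓ a (b + 2) c = L (X 0 ^ a * X 1 ^ b * X 2 ^ c * X 1 ^ 2) := congrArg L (by ring)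
    have e2 : ℓ a b (c + 2) = L (X 0 ^ a * X 1 ^ b * X 2 ^ c * X 2 ^ 2) := congrArg L (by ring)
    rw [e1, e2, this]
  have hall : ∀ a b c, a + b + c = 4 → ℓ a b c = 0 := by
    intro a b c hs
    have h3 : (3 : K) ≠ 0 := by norm_num
    by_cases ha : 2 ≤ a
    · obtain ⟨a, rfl⟩ := Nat.exists_eq_add_of_le' ha
      exact r0 a b c (by omega)
    by_cases hbc : 1 ≤ b ∧ 1 ≤ c
    · obtain ⟨b, rfl⟩ := Nat.exists_eq_add_of_le' hbc.1
      obtain ⟨c, rfl⟩ := Nat.exists_eq_add_of_le' hbc.2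
      exact r1 a b c (by omega)
    obtain ⟨rfl, rfl, rfl⟩ | ⟨rfl, rfl, rfl⟩ | ⟨rfl, rfl, rfl⟩ | ⟨rfl, rfl, rfl⟩ :
      (a = 0 ∧ b = 4 ∧ c = 0) ∨ (a = 1 ∧ b = 3 ∧ c = 0) ∨ (a = 0 ∧ b = 0 ∧ c = 4) ∨
      (a = 1 ∧ b = 0 ∧ c = 3) := by omega
    · rw [r2 0 2 0 rfl, r1 0 1 1 rfl, mul_zero]
    · rw [r2 1 1 0 rfl, r1 1 0 1 rfl, mul_zero]
    · exact (mul_eq_zero.mp ((r2 0 0 2 rfl).symm.trans (r1 0 1 1 rfl))).resolve_left h3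
    · exact (mul_eq_zero.mp ((r2 1 0 1 rfl).symm.trans (r1 1 1 0 rfl))).resolve_left h3
  ext s
  have h1 : L (monomial s.exp 1) = ξ s := by
    rw [hL, Finset.sum_eq_single s]
    · simp
    · intro t _ hts
      rw [coeff_monomial, if_neg fun h => hts (Mon.exp_injective h).symm, zero_mul]
    · simp
  rw [← h1, hmon]
  refine hall _ _ _ ?_
  rw [← degree_eq_add, s.degree_exp]

/-- The partial derivatives of the cubic through nine generic points have no common zero. -/
lemma gen_smooth [IsAlgClosed K] [CharZero K] :
    Gen fun x : Fin 9 × Fin 3 → K => ∀ v : Fin 3 → K,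
      (∀ i, eval v (pderiv i (cubicThrough x)) = 0) → v = 0 := by
  obtain ⟨r, hr⟩ := IsAlgClosed.exists_pow_nat_eq (2 : K) (n := 2) (by norm_num)
  obtain ⟨u, hu⟩ := IsAlgClosed.exists_pow_nat_eq (28 : K) (n := 2) (by norm_num)
  have hx := gen_of_kernel (jacMat K) _ jacMat_homog (weierPt r u) (by
    intro ξ hξ
    obtain ⟨c, hc⟩ := eq_weier hr hu (form_homog _) (eval_cubicThrough (weierPt r u))
    have hc0 : c ≠ 0 := by
      rintro rfl
      apply det_weierPt_ne_zero hr hu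
      rw [← eval_e₀_cubicThrough, cubicThrough, hc]
      simp
    refine jac_weier ξ fun i t => (mul_eq_zero.mp ?_).resolve_left hc0
    rw [← hξ (i, t), Finset.mul_sum]
    refine Finset.sum_congr rfl fun s _ => ?_
    rw [eval_jacMat, cubicThrough, hc, pderiv_C_mul, mul_left_comm (monomial _ _), coeff_C_mul]
    ring)
  refine hx.mono fun x hx v hv => ?_
  have h0 := hx (fun s => eval v (monomial s.exp 1)) (by
    rintro ⟨i, t⟩
    simp only [eval_jacMat]
    have hh : (monomial t.exp 1 * pderiv i (cubicThrough x)).IsHomogeneous 4 :=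
      (isHomogeneous_monomial 1 t.degree_exp).mul ((form_homog _).pderiv (i := i))
    have := congrArg (eval v) (form_coeff hh)
    rw [map_mul, hv, mul_zero, form, map_sum] at this
    rw [← this]
    refine Finset.sum_congr rfl fun s _ => ?_
    rw [eval_monomial, eval_monomial, one_mul])
  ext i
  obtain ⟨s, hs⟩ := Mon.exists_exp (d := 4) (Finsupp.single i 4) (by simp)
  have := congrFun h0 s
  rw [hs, eval_monomial] at this
  simpa using this

end Interpolation

/-! ### Irreducibility and uniqueness -/

section Conclusion

variable {K : Type} [Field K]

/-- Forms of degree `d` with multiplicities `m i` of total at least `3d` at the nine points `x`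
vanish, provided they satisfy the normalization when all `m i` equal `d / 3`. -/
def GoodMult (d : ℕ) (x : Fin 9 × Fin 3 → K) : Prop :=
  ∀ m : Fin 9 → ℕ, 3 * d ≤ ∑ i, m i → ∀ F : MvPolynomial (Fin 3) K, F.IsHomogeneous d →
    (∀ i, MultAtLeastVec F (fun j => x (i, j)) (m i)) →
    ((∀ i, 3 * m i = d) → eval (e₀ K) F = 0) → F = 0

/-- Only finitely many multiplicity vectors matter, since multiplicities may be truncated. -/
lemma gen_goodMult [CharZero K] (d : ℕ) : Gen (GoodMult (K := K) d) := by
  have h : ∀ m : Fin 9 → Fin (3 * d + 2), Gen fun x : Fin 9 × Fin 3 → K =>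
      3 * d ≤ ∑ i, (m i : ℕ) → ∀ F : MvPolynomial (Fin 3) K, F.IsHomogeneous d →
      (∀ i, MultAtLeastVec F (fun j => x (i, j)) (m i)) →
      ((∀ i, 3 * (m i : ℕ) = d) → eval (e₀ K) F = 0) → F = 0 := by
    intro m
    by_cases hs : 3 * d ≤ ∑ i, (m i : ℕ)
    · exact (gen_mult d (fun i => m i) hs).mono fun x hx _ => hx
    · exact ⟨1, 0, isWeightedHomogeneous_one _ _, one_ne_zero, fun x _ h => absurd h hs⟩
  refine (Gen.all h).mono fun x hx m hs F hF hm h0 => ?_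
  refine hx (fun i => ⟨min (m i) (3 * d + 1), by omega⟩) ?_ F hF
    (fun i => multAtLeastVec_mono (hm i) (min_le_left _ _)) fun h3 => h0 fun i => ?_
  · by_cases hall : ∀ i, m i ≤ 3 * d + 1
    · simpa only [min_eq_left (hall _)] using hs
    · push Not at hall
      obtain ⟨i, hi⟩ := hall
      refine le_trans ?_ (Finset.single_le_sum (fun _ _ => Nat.zero_le _) (Finset.mem_univ i))
      change 3 * d ≤ min (m i) (3 * d + 1)
      omega
  · have : 3 * min (m i) (3 * d + 1) = d := h3 i
    omega

lemma multAtLeastVec_lin {F G : MvPolynomial (Fin 3) K} {v : Fin 3 → K} {n : ℕ} (a b : K)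
    (hF : MultAtLeastVec F v n) (hG : MultAtLeastVec G v n) :
    MultAtLeastVec (C a * F + C b * G) v n := fun l hl => by
  rw [pderivs_add, pderivs_C_mul, pderivs_C_mul, map_add, map_mul, map_mul, hF l hl, hG l hl,
    mul_zero, mul_zero, add_zero]

/-- Forms of degree `3k` with multiplicity `k` at the nine points are multiples of the `k`-th power
of the cubic. -/
lemma eq_smul_pow [CharZero K] {x : Fin 9 × Fin 3 → K} {k : ℕ} (hx : GoodMult (3 * k) x)
    (hdet : eval x (interpMat K).det ≠ 0) {F : MvPolynomial (Fin 3) K}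
    (hF : F.IsHomogeneous (3 * k)) (hm : ∀ i, MultAtLeastVec F (fun j => x (i, j)) k) :
    ∃ c : K, F = C c * cubicThrough x ^ k := by
  have ha : eval (e₀ K) (cubicThrough x ^ k) ≠ 0 := by
    rw [map_pow, eval_e₀_cubicThrough]; exact pow_ne_zero _ hdet
  set a := eval (e₀ K) (cubicThrough x ^ k) with ha'
  set b := eval (e₀ K) F with hb
  have h0 := hx (fun _ => k) (by simp; omega) (C a * F + C (-b) * cubicThrough x ^ k)
    ((hF.C_mul _).add (((form_homog _).pow k).C_mul _))
    (fun i => multAtLeastVec_lin _ _ (hm i) (multAtLeastVec_pow (eval_cubicThrough x i) k))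
    (fun _ => by rw [map_add, map_mul, map_mul, eval_C, eval_C, ← ha', ← hb]; ring)
  refine ⟨a⁻¹ * b, ?_⟩
  have h1 : C a * F = C b * cubicThrough x ^ k := by
    rw [C_neg] at h0; linear_combination h0
  rw [C_mul, mul_assoc, ← h1, ← mul_assoc, ← C_mul, inv_mul_cancel₀ ha, C_1, one_mul]

/-- Leading forms are multiplicative. Hence a factorization of a form can be replaced by one into
forms. -/
lemma homogeneousComponent_top_mul (A B : MvPolynomial (Fin 3) K) :
    homogeneousComponent (A.totalDegree + B.totalDegree) (A * B) =
      homogeneousComponent A.totalDegree A * homogeneousComponent B.totalDegree B := by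
  conv_lhs => rw [← sum_homogeneousComponent A, ← sum_homogeneousComponent B,
    Finset.sum_mul_sum, map_sum]
  simp only [map_sum, sum_homogeneousComponent]
  have key : ∀ i j, homogeneousComponent (A.totalDegree + B.totalDegree)
      (homogeneousComponent i A * homogeneousComponent j B) =
      if A.totalDegree + B.totalDegree = i + j then
        homogeneousComponent i A * homogeneousComponent j B else 0 := fun i j =>
    homogeneousComponent_of_mem ((mem_homogeneousSubmodule _ _).mpr
      ((homogeneousComponent_isHomogeneous i A).mul (homogeneousComponent_isHomogeneous j B)))
  simp only [key]
  rw [Finset.sum_eq_single A.totalDegree, Finset.sum_eq_single B.totalDegree]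
  · simp
  · intro j hj hne
    rw [if_neg (by omega)]
  · simp
  · intro i hi hne
    refine Finset.sum_eq_zero fun j hj => if_neg ?_
    rw [Finset.mem_range] at hi hj
    omega
  · simp

/-- A line contains at most two, and a conic at most five, of nine points in general position. -/
lemma card_lt {x : Fin 9 × Fin 3 → K} {d : ℕ} (hx : GoodMult d x) (hd : ¬ 3 ∣ d)
    {A : MvPolynomial (Fin 3) K} (hA : A.IsHomogeneous d) (hA0 : A ≠ 0) :
    {i | eval (fun j => x (i, j)) A = 0}.ncard < 3 * d := by
  classical
  by_contra! h
  refine hA0 (hx (fun i => if eval (fun j => x (i, j)) A = 0 then 1 else 0) ?_ A hA ?_ ?_)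
  · rwa [Finset.sum_boole, ← Set.ncard_coe_finset, Finset.coe_filter_univ]
  · intro i
    split_ifs with h
    · exact multAtLeastVec_one.mpr h
    · exact fun l hl => absurd hl (Nat.not_lt_zero _)
  · exact fun h3 => absurd ⟨_, (h3 0).symm⟩ hd

/-- A factorization into a line and a conic is impossible, since these contain at most two and five
of the nine points. -/
lemma irreducible_cubicThrough [CharZero K] {x : Fin 9 × Fin 3 → K} (h1 : GoodMult 1 x)
    (h2 : GoodMult 2 x) (hdet : eval x (interpMat K).det ≠ 0) : Irreducible (cubicThrough x) := by
  have hE : (cubicThrough x).IsHomogeneous 3 := form_homog _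
  have hE0 : cubicThrough x ≠ 0 := by
    intro h0
    rw [← eval_e₀_cubicThrough, h0, map_zero] at hdet
    exact hdet rfl
  refine ⟨fun hu => (hu.map (eval fun j => x (0, j))).ne_zero (eval_cubicThrough x 0), ?_⟩
  intro A B hAB
  have hA0 : A ≠ 0 := by rintro rfl; simp [hE0] at hAB
  have hB0 : B ≠ 0 := by rintro rfl; simp [hE0] at hAB
  have hdeg : A.totalDegree + B.totalDegree = 3 := by
    rw [← totalDegree_mul_of_isDomain hA0 hB0, ← hAB, hE.totalDegree hE0]
  have htop := homogeneousComponent_top_mul A B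
  rw [hdeg, ← hAB, homogeneousComponent_eq_self hE] at htop
  have hunit : ∀ P : MvPolynomial (Fin 3) K, P ≠ 0 → P.totalDegree = 0 → IsUnit P := by
    intro P hP h
    rw [totalDegree_eq_zero_iff_eq_C] at h
    rw [h] at hP ⊢
    exact (isUnit_iff_ne_zero.mpr fun h0 => hP (by rw [h0, C_0])).map C
  by_cases ha : A.totalDegree = 0
  · exact Or.inl (hunit A hA0 ha)
  by_cases hb : B.totalDegree = 0
  · exact Or.inr (hunit B hB0 hb)
  exfalso
  have hgood : ∀ n, n = 1 ∨ n = 2 → GoodMult n x ∧ ¬ 3 ∣ n := by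
    rintro n (rfl | rfl)
    · exact ⟨h1, by norm_num⟩
    · exact ⟨h2, by norm_num⟩
  obtain ⟨gA, nA⟩ := hgood A.totalDegree (by omega)
  obtain ⟨gB, nB⟩ := hgood B.totalDegree (by omega)
  have cA := card_lt gA nA (homogeneousComponent_isHomogeneous _ A)
    (by intro h; rw [h, zero_mul] at htop; exact hE0 htop)
  have cB := card_lt gB nB (homogeneousComponent_isHomogeneous _ B)
    (by intro h; rw [h, mul_zero] at htop; exact hE0 htop)
  have hcover := Set.ncard_union_le
    {i | eval (fun j => x (i, j)) (homogeneousComponent A.totalDegree A) = 0}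
    {i | eval (fun j => x (i, j)) (homogeneousComponent B.totalDegree B) = 0}
  have huniv : {i | eval (fun j => x (i, j)) (homogeneousComponent A.totalDegree A) = 0} ∪
    {i | eval (fun j => x (i, j)) (homogeneousComponent B.totalDegree B) = 0} = Set.univ := by
    refine Set.eq_univ_of_forall fun i => ?_
    have := eval_cubicThrough x i
    rw [htop, map_mul] at this
    exact mul_eq_zero.mp this
  rw [huniv, Set.ncard_univ, Nat.card_eq_fintype_card, Fintype.card_fin] at hcover
  omega

end Conclusion

end NinePoints

end

/-- Fix `d ≥ 1`.  For generic points `p_1, …, p_9` there is, up to scalar, a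
unique nonzero homogeneous cubic `E` through all nine points; it is irreducible
and defines a smooth curve; and every irreducible homogeneous `F` of degree `d`
not proportional to `E` satisfies `∑ mult_{p_i} F ≤ 3d - 1`. -/
theorem cubic_through_nine_points (K : Type) [Field K] [IsAlgClosed K] [CharZero K]
    (d : ℕ) (hd : 1 ≤ d) :
    GenericTuple K 9 (fun p => ∃ E : MvPolynomial (Fin 3) K,
      E ≠ 0 ∧ E.IsHomogeneous 3 ∧ (∀ i, MvPolynomial.eval ((p i).rep) E = 0) ∧
      Irreducible E ∧
      (∀ q : P2 K, MvPolynomial.eval q.rep E = 0 → IsMultAt E q 1) ∧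
      (∀ E' : MvPolynomial (Fin 3) K, E' ≠ 0 → E'.IsHomogeneous 3 →
        (∀ i, MvPolynomial.eval ((p i).rep) E' = 0) → ∃ c : K, E' = c • E) ∧
      ∀ F : MvPolynomial (Fin 3) K, Irreducible F → F.IsHomogeneous d →
        (¬ ∃ c : K, F = c • E) →
        ∀ mu : Fin 9 → ℕ, (∀ i, IsMultAt F (p i) (mu i)) →
          ∑ i, mu i ≤ 3 * d - 1) := by
  open NinePoints in
  obtain ⟨G, n, hG, hG0, hGP⟩ := (((gen_det (K := K)).and gen_smooth).and
    ((gen_goodMult 1).and (gen_goodMult 2))).and ((gen_goodMult 3).and (gen_goodMult d))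
  refine ⟨G, n, hG0, support_of_weighted hG, fun p _ hp => ?_⟩
  obtain ⟨⟨⟨hdet, hsm⟩, h1, h2⟩, h3, hgd⟩ := hGP _ hp
  set x : Fin 9 × Fin 3 → K := fun q => (p q.1).rep q.2
  have hvan : ∀ i, MvPolynomial.eval (p i).rep (cubicThrough x) = 0 := eval_cubicThrough x
  have hirr := irreducible_cubicThrough h1 h2 hdet
  refine ⟨cubicThrough x, hirr.ne_zero, form_homog _, hvan, hirr, fun q hq => ?_,
    fun E' _ hE' hv => ?_, fun F hF hFd hFE mu hmu => ?_⟩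
  · refine ⟨multAtLeastVec_one.mpr hq, ?_⟩
    by_contra! hne
    exact q.rep_nonzero (hsm _ fun i => hne [i] rfl)
  · obtain ⟨c, hc⟩ := eq_smul_pow (k := 1) h3 hdet hE' fun i => multAtLeastVec_one.mpr (hv i)
    exact ⟨c, by rw [MvPolynomial.smul_eq_C_mul]; simpa using hc⟩
  · by_contra! hlt
    have hs : 3 * d ≤ ∑ i, mu i := by omega
    by_cases hall : ∀ i, 3 * mu i = d
    · obtain ⟨k, rfl⟩ : ∃ k, d = 3 * k := ⟨mu 0, (hall 0).symm⟩
      have hk : ∀ i, mu i = k := fun i => by have := hall i; omega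
      obtain ⟨c, hc⟩ := eq_smul_pow hgd hdet hFd fun i => hk i ▸ (hmu i).1
      obtain ⟨l, rfl⟩ : ∃ l, k = l + 1 := ⟨k - 1, by omega⟩
      rcases l with _ | l
      · exact hFE ⟨c, by rw [MvPolynomial.smul_eq_C_mul]; simpa using hc⟩
      · have hnu : ∀ P, ¬ IsUnit (P * cubicThrough x) := fun P hu =>
          (hu.map (MvPolynomial.eval (p 0).rep)).ne_zero (by rw [map_mul, hvan, mul_zero])
        rw [pow_succ, ← mul_assoc, pow_succ, ← mul_assoc] at hc
        rcases hF.isUnit_or_isUnit hc with hu | hu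
        · exact hnu _ hu
        · exact hirr.not_isUnit hu
    -- Otherwise no normalization is needed, and `F` has to vanish.
    · exact hF.ne_zero (hgd mu hs F hFd (fun i => (hmu i).1) fun h => absurd h hall)
end

section
/- Let Φ be an irreducible plane curve of degree d' ≥ 1 that has ordinary points of multiplicity d_i at pairwise distinct points p_1,…,p_r and exactly 0 nodes as its only singularities, and let d > d' be an integer. Then for a generic tuple of d − d' lines (L_1,…,L_{d−d'}) (i.e. for all tuples in some dense Zariski-open subset of the (d−d')-fold product of the dual projective plane), the plane curve of degree d defined by the product of Φ with the linear forms of L_1,…,L_{d−d'} has ordinary points of multiplicity d_i at p_1,…,p_r and exactly d(d−1)/2 − d'(d'−1)/2 nodes as its only singularities. -/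
/-!
A generic tuple of lines `l` has the following properties: each `l i` meets the curve `Φ = 0`
transversally, no two of the lines meet on the curve, no three of them are concurrent
(`UnionLines.GeneralPosition`), and none of them passes through one of the points `p j`.

Of these, transversality is the one with content. Choose auxiliary linear forms `A`, `B`; the line
`l` is then spanned by the points `u = l ⨯ A` and `w = l ⨯ B`, and transversality means that the
polynomial `t ↦ Φ (w + t u)` of degree `deg Φ` is separable. Its resultant with its derivative is a
form in the coefficients of `l`, so it suffices that this form is not identically zero. As the
lines through a fixed point `P` off the curve already suffice, this reduces to the separability of
`t ↦ Φ (X + t P)` over the function field of the plane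
(`UnionLines.generic_resultant_ne_zero`), which follows from the irreducibility of `Φ` in
characteristic zero. The other conditions are visibly given by the nonvanishing of a nonzero
multihomogeneous polynomial.

When all of them hold, the product `F` of `Φ` and the linear forms is squarefree, as its factors are
irreducible and pairwise non-associated. Multiplying by a form that does not vanish at a point
changes neither the multiplicity nor the tangent lines there (`UnionLines.ordinaryAtVec_mul`), so
the points `p j` remain ordinary of the same multiplicity. Outside of them `Φ` is smooth, hence a
point is singular on `F` if and only if it lies on two of the components, and then it lies on
exactly two, with distinct tangents there: it is a node (`UnionLines.ordinaryAtVec_two_mul`).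
With `s = d - d'` lines there are `d'` such points on the curve for each line, and one for each pair
of lines, in total `s d' + s (s - 1) / 2 = d (d - 1) / 2 - d' (d' - 1) / 2`
(`UnionLines.GeneralPosition.exists_nodes`, `UnionLines.nodes_eq`).
-/

namespace UnionLines

open scoped Matrix

variable {K : Type} [Field K]

/-! ### Multiplicities and restriction to a line -/

/-- The gradient of `F` at the vector `v`. -/
noncomputable def grad (F : MvPolynomial (Fin 3) K) (v : Fin 3 → K) : Fin 3 → K :=
  fun i => MvPolynomial.eval v (MvPolynomial.pderiv i F)

lemma pderivs_concat (l : List (Fin 3)) (i : Fin 3) (F : MvPolynomial (Fin 3) K) :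
    pderivs (l ++ [i]) F = pderivs l (MvPolynomial.pderiv i F) := by
  simp [pderivs]

lemma pderivs_add (l : List (Fin 3)) (F G : MvPolynomial (Fin 3) K) :
    pderivs l (F + G) = pderivs l F + pderivs l G := by
  induction l with
  | nil => rfl
  | cons a l ih => simp only [pderivs, List.foldr_cons] at ih ⊢; rw [ih, map_add]

lemma multAtLeastVec_pderiv {F : MvPolynomial (Fin 3) K} {v : Fin 3 → K} {m : ℕ}
    (h : MultAtLeastVec F v (m + 1)) (i : Fin 3) :
    MultAtLeastVec (MvPolynomial.pderiv i F) v m := by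
  intro l hl
  rw [← pderivs_concat]
  exact h _ (by simpa using hl)

/-- If `F` vanishes to order `m` at `v`, then in the Leibniz expansion of a derivative of order
at most `m` of `F * H` at `v` only the term in which every derivative falls on `F` survives. -/
lemma eval_pderivs_mul (v : Fin 3 → K) (l : List (Fin 3)) :
    ∀ (F H : MvPolynomial (Fin 3) K) (m : ℕ), l.length ≤ m → MultAtLeastVec F v m →
      MvPolynomial.eval v (pderivs l (F * H)) =
        MvPolynomial.eval v (pderivs l F) * MvPolynomial.eval v H := by
  induction l using List.reverseRecOn with
  | nil => intro F H m _ _; simp [pderivs]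
  | append_singleton l i ih =>
    intro F H m hl hF
    obtain _ | m := m
    · simp at hl
    have hl' : l.length ≤ m := by simpa using hl
    rw [pderivs_concat, pderivs_concat, Derivation.leibniz, smul_eq_mul, smul_eq_mul, pderivs_add,
      map_add, ih F _ (m + 1) (by omega) hF, mul_comm H, ih _ H m hl' (multAtLeastVec_pderiv hF i),
      hF l (by omega), zero_mul, zero_add]

lemma multAtLeastVec_mul {F : MvPolynomial (Fin 3) K} {v : Fin 3 → K} {m : ℕ}
    (h : MultAtLeastVec F v m) (H : MvPolynomial (Fin 3) K) : MultAtLeastVec (F * H) v m := by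
  intro l hl
  rw [eval_pderivs_mul v l F H m hl.le h, h l hl, zero_mul]

lemma linePoly_mul (F G : MvPolynomial (Fin 3) K) (v w : Fin 3 → K) :
    linePoly (F * G) v w = linePoly F v w * linePoly G v w := by
  simp [linePoly, MvPolynomial.eval₂_mul]

lemma linePoly_eval (F : MvPolynomial (Fin 3) K) (v w : Fin 3 → K) (t : K) :
    (linePoly F v w).eval t = MvPolynomial.eval (v + t • w) F := by
  induction F using MvPolynomial.induction_on with
  | C a => simp [linePoly]
  | add p q hp hq =>
    simp only [linePoly, MvPolynomial.eval₂_add, Polynomial.eval_add, map_add] at hp hq ⊢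
    rw [hp, hq]
  | mul_X p j hp =>
    rw [linePoly_mul, Polynomial.eval_mul, hp, map_mul]
    simp [linePoly, mul_comm (w j)]

lemma linePoly_coeff_zero (F : MvPolynomial (Fin 3) K) (v w : Fin 3 → K) :
    (linePoly F v w).coeff 0 = MvPolynomial.eval v F := by
  rw [Polynomial.coeff_zero_eq_eval_zero, linePoly_eval]; simp

lemma linePoly_derivative (F : MvPolynomial (Fin 3) K) (v w : Fin 3 → K) :
    (linePoly F v w).derivative =
      ∑ i, Polynomial.C (w i) * linePoly (MvPolynomial.pderiv i F) v w := by
  induction F using MvPolynomial.induction_on with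
  | C a => simp [linePoly]
  | add p q hp hq =>
    simp only [linePoly, MvPolynomial.eval₂_add, map_add, mul_add,
      Finset.sum_add_distrib] at hp hq ⊢
    rw [hp, hq]
  | mul_X p j hp =>
    have hX : linePoly (MvPolynomial.X j) v w =
        Polynomial.C (v j) + Polynomial.C (w j) * Polynomial.X := by simp [linePoly]
    have hpd : ∀ i, linePoly (MvPolynomial.pderiv i (p * MvPolynomial.X j)) v w =
        linePoly p v w * (if j = i then 1 else 0) +
          linePoly (MvPolynomial.X j) v w * linePoly (MvPolynomial.pderiv i p) v w := by
      intro i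
      rw [Derivation.leibniz, smul_eq_mul, smul_eq_mul, MvPolynomial.pderiv_X]
      by_cases h : j = i
      · subst h; simp [linePoly, MvPolynomial.eval₂_add, MvPolynomial.eval₂_mul]
      · simp [linePoly, MvPolynomial.eval₂_mul, h]
    have hd : (linePoly (MvPolynomial.X j) v w).derivative = Polynomial.C (w j) := by
      rw [hX]; simp
    simp_rw [hpd, mul_add]
    rw [linePoly_mul, Polynomial.derivative_mul, hp, hd, Finset.sum_add_distrib, Finset.sum_mul,
      add_comm]
    refine congrArg₂ _ ?_ (Finset.sum_congr rfl fun i _ => ?_)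
    · rw [Finset.sum_eq_single j]
      · rw [if_pos rfl]; ring
      · intro i _ hi; rw [if_neg hi.symm]; ring
      · simp
    · ring

lemma linePoly_derivative_eval (F : MvPolynomial (Fin 3) K) (v w : Fin 3 → K) (t : K) :
    (linePoly F v w).derivative.eval t = grad F (v + t • w) ⬝ᵥ w := by
  rw [linePoly_derivative, Polynomial.eval_finsetSum]
  simp [dotProduct, grad, linePoly_eval, mul_comm]

lemma linePoly_coeff_one (F : MvPolynomial (Fin 3) K) (v w : Fin 3 → K) :
    (linePoly F v w).coeff 1 = grad F v ⬝ᵥ w := by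
  have := linePoly_derivative_eval F v w 0
  rw [← Polynomial.coeff_zero_eq_eval_zero, Polynomial.coeff_derivative] at this
  simpa using this

lemma multAtLeastVec_coeff_linePoly [CharZero K] {v : Fin 3 → K} (w : Fin 3 → K) {k m : ℕ} :
    ∀ {F : MvPolynomial (Fin 3) K}, MultAtLeastVec F v m → k < m →
      (linePoly F v w).coeff k = 0 := by
  induction k generalizing m with
  | zero =>
    intro F h hk
    rw [linePoly_coeff_zero]
    exact h [] (by simpa using hk)
  | succ k ih =>
    intro F h hk
    obtain _ | m := m
    · omega
    have h1 : (linePoly F v w).derivative.coeff k = 0 := by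
      rw [linePoly_derivative, Polynomial.finsetSum_coeff]
      refine Finset.sum_eq_zero fun i _ => ?_
      rw [Polynomial.coeff_C_mul, ih (multAtLeastVec_pderiv h i) (by omega), mul_zero]
    rw [Polynomial.coeff_derivative] at h1
    exact (mul_eq_zero.mp h1).resolve_right (by exact_mod_cast k.succ_ne_zero)

/-- Multiplying by a factor which does not vanish at `v` changes neither the multiplicity nor,
up to a nonzero constant, the initial form. -/
lemma ordinaryAtVec_mul [CharZero K] {F H : MvPolynomial (Fin 3) K} {v : Fin 3 → K} {m : ℕ}
    (h : OrdinaryAtVec F v m) (hH : MvPolynomial.eval v H ≠ 0) : OrdinaryAtVec (F * H) v m := by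
  obtain ⟨⟨h1, l, hl, hl'⟩, c, L, hL, hL', hc⟩ := h
  refine ⟨⟨multAtLeastVec_mul h1 H, l, hl, ?_⟩, c * MvPolynomial.eval v H, L, hL, hL', fun w => ?_⟩
  · rw [eval_pderivs_mul v l F H m hl.le h1]
    exact mul_ne_zero hl' hH
  · rw [linePoly_mul, Polynomial.coeff_mul, Finset.sum_eq_single (m, 0)]
    · rw [hc, linePoly_coeff_zero]; ring
    · rintro ⟨a, b⟩ hab hne
      rw [Finset.HasAntidiagonal.mem_antidiagonal] at hab
      have : a < m := by
        rcases Nat.eq_zero_or_pos b with rfl | hb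
        · exact absurd (by simpa using hab) (by simpa using hne)
        · simp only at hab; omega
      simp only [multAtLeastVec_coeff_linePoly w h1 this, zero_mul]
    · simp

lemma multAtLeastVec_one_iff {F : MvPolynomial (Fin 3) K} {v : Fin 3 → K} :
    MultAtLeastVec F v 1 ↔ MvPolynomial.eval v F = 0 := by
  constructor
  · intro h; exact h [] (by simp)
  · intro h l hl
    obtain rfl : l = [] := by simpa using hl
    exact h

lemma multAtLeastVec_two_iff {F : MvPolynomial (Fin 3) K} {v : Fin 3 → K} :
    MultAtLeastVec F v 2 ↔ MvPolynomial.eval v F = 0 ∧ grad F v = 0 := by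
  constructor
  · intro h
    exact ⟨h [] (by simp), funext fun i => h [i] (by simp)⟩
  · rintro ⟨h, h'⟩ l hl
    match l, hl with
    | [], _ => exact h
    | [i], _ => exact congrFun h' i
    | _ :: _ :: _, hl => simp at hl

/-- A smooth point of one factor that lies on no other factor is a smooth point of the product. -/
lemma not_multAtLeastVec_two_mul {F H : MvPolynomial (Fin 3) K} {v : Fin 3 → K}
    (hF : grad F v ≠ 0) (hH : MvPolynomial.eval v H ≠ 0) : ¬ MultAtLeastVec (F * H) v 2 := by
  intro h
  rw [multAtLeastVec_two_iff] at h
  have hF0 : MvPolynomial.eval v F = 0 := by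
    simpa [hH] using h.1
  apply hF
  ext i
  have := congrFun h.2 i
  simpa [grad, Derivation.leibniz, hF0, hH] using this

lemma grad_dotProduct_self {F : MvPolynomial (Fin 3) K} {n : ℕ} (hF : F.IsHomogeneous n)
    {v : Fin 3 → K} (hv : MvPolynomial.eval v F = 0) : grad F v ⬝ᵥ v = 0 := by
  have := congrArg (MvPolynomial.eval v) hF.sum_X_mul_pderiv
  simpa [hv, dotProduct, grad, mul_comm] using this

/-- At a common zero where their gradients are linearly independent, two homogeneous polynomials
cross transversally, so their product has a node. -/
lemma ordinaryAtVec_two_mul [CharZero K] {f g : MvPolynomial (Fin 3) K} {m n : ℕ}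
    (hf : f.IsHomogeneous m) (hg : g.IsHomogeneous n) {v : Fin 3 → K}
    (hfv : MvPolynomial.eval v f = 0) (hgv : MvPolynomial.eval v g = 0)
    (h1 : ∀ a : K, grad f v ≠ a • grad g v) (h2 : ∀ a : K, grad g v ≠ a • grad f v) :
    OrdinaryAtVec (f * g) v 2 := by
  have hf0 : grad f v ≠ 0 := by simpa using h1 0
  have hg0 : grad g v ≠ 0 := by simpa using h2 0
  have hmul : MultAtLeastVec (f * g) v 2 := by
    rw [multAtLeastVec_two_iff]
    refine ⟨by simp [hfv], funext fun i => ?_⟩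
    simp [grad, Derivation.leibniz, hfv, hgv]
  refine ⟨⟨hmul, ?_⟩, 1, ![grad f v, grad g v], ?_, ?_, fun w => ?_⟩
  · by_contra! hall
    have key : ∀ i j, grad f v i * grad g v j + grad f v j * grad g v i = 0 := by
      intro i j
      have := hall [i, j] rfl
      simp [pderivs, Derivation.leibniz, hfv, hgv] at this
      simp only [grad]
      linear_combination this
    obtain ⟨i, hi⟩ := Function.ne_iff.mp hf0
    have hi' : grad f v i ≠ 0 := hi
    have hgi : grad g v i = 0 := by
      have h2 : (2 : K) * (grad f v i * grad g v i) = 0 := by linear_combination key i i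
      simpa [hi'] using h2
    apply hg0
    ext j
    have := key i j
    simpa [hgi, hi'] using this
  · intro i
    fin_cases i
    · exact grad_dotProduct_self hf hfv
    · exact grad_dotProduct_self hg hgv
  · intro i j hij a
    fin_cases i <;> fin_cases j
    · exact absurd rfl hij
    · exact h1 a
    · exact h2 a
    · exact absurd rfl hij
  · have e : Finset.HasAntidiagonal.antidiagonal (2 : ℕ) = {(0, 2), (1, 1), (2, 0)} := rfl
    rw [linePoly_mul, Polynomial.coeff_mul, e]
    simp [linePoly_coeff_zero, hfv, hgv, linePoly_coeff_one, Fin.prod_univ_two, dotProduct]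

/-! ### Multihomogeneous polynomials and generic tuples of lines -/

lemma eval_smul_of_isHomogeneous {F : MvPolynomial (Fin 3) K} {n : ℕ} (hF : F.IsHomogeneous n)
    (c : K) (v : Fin 3 → K) :
    MvPolynomial.eval (c • v) F = c ^ n * MvPolynomial.eval v F := by
  rw [MvPolynomial.eval_eq', MvPolynomial.eval_eq', Finset.mul_sum]
  refine Finset.sum_congr rfl fun d hd => ?_
  have hd' : n = ∑ i, d i := (hF.degree_eq_sum_deg_support hd).trans
    (Finset.sum_subset (Finset.subset_univ _) fun x _ hx => by simpa using hx)
  simp only [Pi.smul_apply, smul_eq_mul, mul_pow, Finset.prod_mul_distrib,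
    Finset.prod_pow_eq_pow_sum, ← hd']
  ring

lemma eval_linearForm (g x : Fin 3 → K) : MvPolynomial.eval x (linearForm g) = g ⬝ᵥ x := by
  simp [linearForm, dotProduct]

lemma linearForm_isHomogeneous (g : Fin 3 → K) : (linearForm g).IsHomogeneous 1 :=
  MvPolynomial.IsHomogeneous.sum _ _ _ fun _ _ => MvPolynomial.isHomogeneous_C_mul_X _ _

lemma grad_linearForm (g v : Fin 3 → K) : grad (linearForm g) v = g := by
  ext i
  simp [grad, linearForm, MvPolynomial.pderiv_X, Pi.single_apply]

/-- The multidegree on polynomials in `s` groups of three variables: the variable `(i, j)` has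
degree the `i`-th unit vector of `ℕ^s`. -/
def multiWeight (s : ℕ) : Fin s × Fin 3 → (Fin s → ℕ) := fun q => Pi.single q.1 1

lemma isWeightedHomogeneous_iff {s : ℕ} {G : MvPolynomial (Fin s × Fin 3) K} {n : Fin s → ℕ} :
    MvPolynomial.IsWeightedHomogeneous (multiWeight s) G n ↔
      ∀ m ∈ G.support, ∀ i : Fin s, ∑ j : Fin 3, m (i, j) = n i := by
  have key : ∀ (m : Fin s × Fin 3 →₀ ℕ) (i : Fin s),
      Finsupp.weight (multiWeight s) m i = ∑ j : Fin 3, m (i, j) := by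
    intro m i
    rw [Finsupp.weight_apply, Finsupp.sum_fintype _ _ (by simp), Finset.sum_apply,
      Fintype.sum_prod_type, Finset.sum_eq_single i]
    · simp [multiWeight]
    · intro b _ hb
      simp [multiWeight, hb.symm]
    · simp
  simp only [MvPolynomial.IsWeightedHomogeneous, MvPolynomial.mem_support_iff, funext_iff, key]

lemma genericLines_mono {s : ℕ} {P Q : (Fin s → Fin 3 → K) → Prop} (h : GenericLines K s P)
    (hPQ : ∀ l, P l → Q l) : GenericLines K s Q := by
  obtain ⟨G, n, h0, h1, h2⟩ := h
  exact ⟨G, n, h0, h1, fun l hl hG => hPQ l (h2 l hl hG)⟩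

lemma genericLines_true {s : ℕ} {P : (Fin s → Fin 3 → K) → Prop}
    (h : ∀ l, (∀ i, l i ≠ 0) → P l) : GenericLines K s P :=
  ⟨1, 0, one_ne_zero, isWeightedHomogeneous_iff.mp (MvPolynomial.isWeightedHomogeneous_one K _),
    fun l hl _ => h l hl⟩

/-- A finite intersection of generic conditions is generic: multiply the defining polynomials. -/
lemma genericLines_forall {s : ℕ} {ι : Type} [Fintype ι] {P : ι → (Fin s → Fin 3 → K) → Prop}
    (h : ∀ a, GenericLines K s (P a)) : GenericLines K s (fun l => ∀ a, P a l) := by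
  choose G n h0 h1 h2 using h
  refine ⟨∏ a, G a, ∑ a, n a, Finset.prod_ne_zero_iff.mpr fun a _ => h0 a,
    isWeightedHomogeneous_iff.mp (MvPolynomial.IsWeightedHomogeneous.prod _ _ _ fun a _ =>
      isWeightedHomogeneous_iff.mpr (h1 a)), fun l hl hG a => h2 a l hl ?_⟩
  rw [map_prod] at hG
  exact Finset.prod_ne_zero_iff.mp hG a (Finset.mem_univ a)

lemma genericLines_and {s : ℕ} {P Q : (Fin s → Fin 3 → K) → Prop}
    (hP : GenericLines K s P) (hQ : GenericLines K s Q) :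
    GenericLines K s (fun l => P l ∧ Q l) := by
  refine genericLines_mono (genericLines_forall (ι := Bool) (P := fun b l => cond b (P l) (Q l))
    ?_) fun l h => ⟨h true, h false⟩
  rintro (_ | _)
  · exact hQ
  · exact hP

lemma genericLines_of_eval_ne_zero {s : ℕ} {G : MvPolynomial (Fin s × Fin 3) K} {n : Fin s → ℕ}
    (hG : MvPolynomial.IsWeightedHomogeneous (multiWeight s) G n) (l₀ : Fin s → Fin 3 → K)
    (h₀ : MvPolynomial.eval (fun q : Fin s × Fin 3 => l₀ q.1 q.2) G ≠ 0) :
    GenericLines K s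
      (fun l => MvPolynomial.eval (fun q : Fin s × Fin 3 => l q.1 q.2) G ≠ 0) :=
  ⟨G, n, by rintro rfl; simp at h₀, isWeightedHomogeneous_iff.mp hG, fun _ _ h => h⟩

lemma isWeightedHomogeneous_aeval {s n : ℕ} {φ : MvPolynomial (Fin 3) K}
    (hφ : φ.IsHomogeneous n) {g : Fin 3 → MvPolynomial (Fin s × Fin 3) K} {e : Fin s → ℕ}
    (hg : ∀ j, MvPolynomial.IsWeightedHomogeneous (multiWeight s) (g j) e) :
    MvPolynomial.IsWeightedHomogeneous (multiWeight s) (MvPolynomial.aeval g φ) (n • e) := by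
  rw [MvPolynomial.aeval_def, MvPolynomial.eval₂_eq']
  refine MvPolynomial.IsWeightedHomogeneous.sum _ _ _ fun d hd => ?_
  have hd' : n = ∑ i, d i := (hφ.degree_eq_sum_deg_support hd).trans
    (Finset.sum_subset (Finset.subset_univ _) fun x _ hx => by simpa using hx)
  have := (MvPolynomial.IsWeightedHomogeneous.prod Finset.univ (fun i => g i ^ d i)
    (fun i => d i • e) (w := multiWeight s) fun i _ => (hg i).pow (d i)).C_mul
      (φ.coeff d)
  rwa [← Finset.sum_smul, ← hd'] at this

lemma eval_aeval {σ : Type} (x : σ → K) (g : Fin 3 → MvPolynomial σ K)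
    (φ : MvPolynomial (Fin 3) K) :
    MvPolynomial.eval x (MvPolynomial.aeval g φ) =
      MvPolynomial.eval (fun j => MvPolynomial.eval x (g j)) φ := by
  induction φ using MvPolynomial.induction_on with
  | C a => simp
  | add p q hp hq => simp only [map_add, hp, hq]
  | mul_X p j hp => simp only [map_mul, MvPolynomial.aeval_X, MvPolynomial.eval_X, hp]

/-- A nonzero homogeneous polynomial imposes a generic condition on a single line. -/
lemma genericLines_single {s n : ℕ} {φ : MvPolynomial (Fin 3) K} (hφ : φ.IsHomogeneous n)
    {v : Fin 3 → K} (hv : MvPolynomial.eval v φ ≠ 0) (i : Fin s) :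
    GenericLines K s (fun l => MvPolynomial.eval (l i) φ ≠ 0) := by
  have h1 := isWeightedHomogeneous_aeval hφ (g := fun j => MvPolynomial.X (i, j))
    (e := Pi.single i 1) fun j => MvPolynomial.isWeightedHomogeneous_X K (multiWeight s) (i, j)
  have h2 : ∀ l : Fin s → Fin 3 → K, MvPolynomial.eval (fun q : Fin s × Fin 3 => l q.1 q.2)
      (MvPolynomial.aeval (fun j => MvPolynomial.X (i, j)) φ) = MvPolynomial.eval (l i) φ := by
    intro l
    simp only [eval_aeval, MvPolynomial.eval_X]
  have h3 := genericLines_of_eval_ne_zero h1 (fun _ => v) (fun h => hv ((h2 fun _ => v).symm.trans h))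
  simpa only [h2] using h3

/-- The cross product of the generic linear forms in the groups `i` and `j`. -/
noncomputable def crossX (K : Type) [Field K] {s : ℕ} (i j : Fin s) :
    Fin 3 → MvPolynomial (Fin s × Fin 3) K :=
  crossProduct (fun a => MvPolynomial.X (i, a)) (fun a => MvPolynomial.X (j, a))

lemma crossX_isWeightedHomogeneous {s : ℕ} (i j : Fin s) (a : Fin 3) :
    MvPolynomial.IsWeightedHomogeneous (multiWeight s) (crossX K i j a)
      (Pi.single i 1 + Pi.single j 1) := by
  have h : ∀ b c : Fin 3, MvPolynomial.IsWeightedHomogeneous (multiWeight s)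
      (MvPolynomial.X (i, b) * MvPolynomial.X (j, c) : MvPolynomial (Fin s × Fin 3) K)
      (Pi.single i 1 + Pi.single j 1) := fun b c =>
    (MvPolynomial.isWeightedHomogeneous_X K (multiWeight s) (i, b)).mul
      (MvPolynomial.isWeightedHomogeneous_X K (multiWeight s) (j, c))
  fin_cases a <;> simpa [crossX, cross_apply] using (h _ _).sub (h _ _)

lemma eval_crossX {s : ℕ} (i j : Fin s) (l : Fin s → Fin 3 → K) (a : Fin 3) :
    MvPolynomial.eval (fun q : Fin s × Fin 3 => l q.1 q.2) (crossX K i j a) =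
      (l i ⨯₃ l j) a := by
  fin_cases a <;> simp [crossX, cross_apply]

/-- Generically, two of the lines do not meet on a given curve `φ = 0`. If `φ` has positive degree,
and hence vanishes at `0`, this condition includes that the two lines are distinct. -/
lemma genericLines_pair {s n : ℕ} {φ : MvPolynomial (Fin 3) K} (hφ : φ.IsHomogeneous n)
    {v : Fin 3 → K} (hv : MvPolynomial.eval v φ ≠ 0) (hv0 : v 0 ≠ 0) {i j : Fin s} (hij : i ≠ j) :
    GenericLines K s (fun l => MvPolynomial.eval (l i ⨯₃ l j) φ ≠ 0) := by
  have h1 := isWeightedHomogeneous_aeval hφ (crossX_isWeightedHomogeneous (K := K) i j)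
  have h2 : ∀ l : Fin s → Fin 3 → K, MvPolynomial.eval (fun q : Fin s × Fin 3 => l q.1 q.2)
      (MvPolynomial.aeval (crossX K i j) φ) = MvPolynomial.eval (l i ⨯₃ l j) φ := by
    intro l
    simp only [eval_aeval, eval_crossX]
  -- two explicit vectors whose cross product is a multiple of `v`
  have hcr : ![-v 1, v 0, 0] ⨯₃ ![-v 2, 0, v 0] = v 0 • v := by
    ext a; fin_cases a <;> simp [cross_apply, mul_comm (v 1)]
  have h4 : MvPolynomial.eval (v 0 • v) φ ≠ 0 := by
    rw [eval_smul_of_isHomogeneous hφ]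
    exact mul_ne_zero (pow_ne_zero _ hv0) hv
  set l₀ : Fin s → Fin 3 → K := fun k => if k = i then ![-v 1, v 0, 0] else ![-v 2, 0, v 0]
    with hl₀
  have h5 : l₀ i ⨯₃ l₀ j = v 0 • v := by
    rw [← hcr, hl₀]; simp only [if_pos, if_neg hij.symm]
  have h3 := genericLines_of_eval_ne_zero h1 l₀ fun h => h4 (by rw [← h5]; exact (h2 l₀).symm.trans h)
  simpa only [h2] using h3

/-- Generically, no three lines are concurrent. -/
lemma genericLines_triple {s : ℕ} {i j k : Fin s} (hij : i ≠ j) (hik : i ≠ k) (hjk : j ≠ k) :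
    GenericLines K s (fun l => l k ⬝ᵥ (l i ⨯₃ l j) ≠ 0) := by
  have h1 : MvPolynomial.IsWeightedHomogeneous (multiWeight s)
      (∑ a, MvPolynomial.X (k, a) * crossX K i j a)
      (Pi.single k 1 + (Pi.single i 1 + Pi.single j 1)) :=
    MvPolynomial.IsWeightedHomogeneous.sum _ _ _ fun a _ =>
      (MvPolynomial.isWeightedHomogeneous_X K (multiWeight s) (k, a)).mul
        (crossX_isWeightedHomogeneous i j a)
  have h2 : ∀ l : Fin s → Fin 3 → K, MvPolynomial.eval (fun q : Fin s × Fin 3 => l q.1 q.2)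
      (∑ a, MvPolynomial.X (k, a) * crossX K i j a) = l k ⬝ᵥ (l i ⨯₃ l j) := by
    intro l
    simp only [map_sum, map_mul, MvPolynomial.eval_X, eval_crossX, dotProduct]
  set l₀ : Fin s → Fin 3 → K :=
    fun m => if m = i then ![1, 0, 0] else if m = j then ![0, 1, 0] else ![0, 0, 1] with hl₀
  have h5 : l₀ k ⬝ᵥ (l₀ i ⨯₃ l₀ j) = 1 := by
    simp [hl₀, hij.symm, hik.symm, hjk.symm, cross_apply, dotProduct, Fin.sum_univ_three]
  have h3 := genericLines_of_eval_ne_zero h1 l₀ fun h =>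
    one_ne_zero (h5.symm.trans ((h2 l₀).symm.trans h))
  simpa only [h2] using h3


/-! ### Lines meeting a curve transversally -/

/-- The restriction of `F` to the line `t ↦ v + t • w`, where now the vectors `v` and `w` have
coordinates in an arbitrary commutative `K`-algebra; over `K` itself this is `linePoly`. -/
noncomputable def lineP {R : Type} [CommRing R] [Algebra K R] (F : MvPolynomial (Fin 3) K)
    (v w : Fin 3 → R) : Polynomial R :=
  MvPolynomial.aeval (fun i => Polynomial.C (v i) + Polynomial.C (w i) * Polynomial.X) F

lemma lineP_eq_linePoly (F : MvPolynomial (Fin 3) K) (v w : Fin 3 → K) :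
    lineP F v w = linePoly F v w := rfl

section LineP

variable {R S : Type} [CommRing R] [Algebra K R] [CommRing S] [Algebra K S]

lemma lineP_map (φ : R →ₐ[K] S) (F : MvPolynomial (Fin 3) K) (v w : Fin 3 → R) :
    (lineP F v w).map (φ : R →+* S) = lineP F (fun i => φ (v i)) (fun i => φ (w i)) := by
  unfold lineP
  induction F using MvPolynomial.induction_on with
  | C a => simp
  | add p q hp hq => simp only [map_add, Polynomial.map_add, hp, hq]
  | mul_X p j hp =>
    simp only [map_mul, Polynomial.map_mul, hp, MvPolynomial.aeval_X]
    simp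

lemma lineP_eq_sum (F : MvPolynomial (Fin 3) K) (v w : Fin 3 → R) :
    lineP F v w = ∑ d ∈ F.support, Polynomial.C (algebraMap K R (F.coeff d)) *
      ∏ i, (Polynomial.C (v i) + Polynomial.C (w i) * Polynomial.X) ^ d i := by
  rw [lineP, MvPolynomial.aeval_def, MvPolynomial.eval₂_eq']
  rfl

lemma sum_eq_of_mem_support {F : MvPolynomial (Fin 3) K} {n : ℕ} (hF : F.IsHomogeneous n)
    {d : Fin 3 →₀ ℕ} (hd : d ∈ F.support) : ∑ i, d i = n :=
  ((hF.degree_eq_sum_deg_support hd).trans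
    (Finset.sum_subset (Finset.subset_univ _) fun x _ hx => by simpa using hx)).symm

lemma natDegree_lineFactor_le (a b : R) (k : ℕ) :
    ((Polynomial.C a + Polynomial.C b * Polynomial.X) ^ k).natDegree ≤ k := by
  refine Polynomial.natDegree_pow_le_of_le k (m := 1) ?_ |>.trans (by omega)
  compute_degree

lemma lineP_natDegree_le {F : MvPolynomial (Fin 3) K} {n : ℕ} (hF : F.IsHomogeneous n)
    (v w : Fin 3 → R) : (lineP F v w).natDegree ≤ n := by
  rw [lineP_eq_sum]
  refine Polynomial.natDegree_sum_le_of_forall_le _ _ fun d hd => ?_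
  rw [← sum_eq_of_mem_support hF hd]
  refine (Polynomial.natDegree_C_mul_le _ _).trans ((Polynomial.natDegree_prod_le _ _).trans ?_)
  exact Finset.sum_le_sum fun i _ => natDegree_lineFactor_le _ _ _

/-- The leading coefficient of the restriction of `F` to the line is the value of `F` at the
direction vector. -/
lemma lineP_coeff {F : MvPolynomial (Fin 3) K} {n : ℕ} (hF : F.IsHomogeneous n)
    (v w : Fin 3 → R) : (lineP F v w).coeff n = MvPolynomial.aeval w F := by
  rw [lineP_eq_sum, MvPolynomial.aeval_def, MvPolynomial.eval₂_eq', Polynomial.finsetSum_coeff]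
  refine Finset.sum_congr rfl fun d hd => ?_
  rw [Polynomial.coeff_C_mul, ← sum_eq_of_mem_support hF hd]
  congr 1
  have hbase : ∀ (i : Fin 3) (e : ℕ),
      ((Polynomial.C (v i) + Polynomial.C (w i) * Polynomial.X) ^ e).coeff e = w i ^ e := by
    intro i e
    have := Polynomial.coeff_pow_of_natDegree_le (m := e) (n := 1)
      (p := Polynomial.C (v i) + Polynomial.C (w i) * Polynomial.X) (by compute_degree)
    simpa using this
  rw [Fin.prod_univ_three, Fin.sum_univ_three, Fin.prod_univ_three,
    Polynomial.coeff_mul_add_eq_of_natDegree_le _ (natDegree_lineFactor_le _ _ _),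
    Polynomial.coeff_mul_add_eq_of_natDegree_le (natDegree_lineFactor_le _ _ _)
      (natDegree_lineFactor_le _ _ _), hbase, hbase, hbase]
  exact Polynomial.natDegree_mul_le_of_le (natDegree_lineFactor_le _ _ _)
    (natDegree_lineFactor_le _ _ _)

end LineP

lemma coeff_isHomogeneous_mul {p q : Polynomial (MvPolynomial (Fin 3) K)} {m n : ℕ}
    (hp : ∀ k, (p.coeff k).IsHomogeneous m) (hq : ∀ k, (q.coeff k).IsHomogeneous n) (k : ℕ) :
    ((p * q).coeff k).IsHomogeneous (m + n) := by
  rw [Polynomial.coeff_mul]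
  exact MvPolynomial.IsHomogeneous.sum _ _ _ fun _ _ => (hp _).mul (hq _)

lemma coeff_isHomogeneous_one (k : ℕ) :
    ((1 : Polynomial (MvPolynomial (Fin 3) K)).coeff k).IsHomogeneous 0 := by
  rw [Polynomial.coeff_one]
  split_ifs
  · exact MvPolynomial.isHomogeneous_one _ _
  · exact MvPolynomial.isHomogeneous_zero _ _ _

lemma coeff_isHomogeneous_pow {p : Polynomial (MvPolynomial (Fin 3) K)} {m : ℕ}
    (hp : ∀ k, (p.coeff k).IsHomogeneous m) (e : ℕ) :
    ∀ k, ((p ^ e).coeff k).IsHomogeneous (e * m) := by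
  induction e with
  | zero => intro k; rw [pow_zero, zero_mul]; exact coeff_isHomogeneous_one k
  | succ e ih => intro k; rw [pow_succ, Nat.succ_mul]; exact coeff_isHomogeneous_mul ih hp k

/-- If the coordinates of `v` and `w` are homogeneous polynomials of the same degree `e`, then all
coefficients of the restriction of `F` to `t ↦ v + t • w` are homogeneous of degree
`deg F * e`. -/
lemma lineP_coeff_isHomogeneous {F : MvPolynomial (Fin 3) K} {n : ℕ} (hF : F.IsHomogeneous n)
    {v w : Fin 3 → MvPolynomial (Fin 3) K} {e : ℕ} (hv : ∀ i, (v i).IsHomogeneous e)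
    (hw : ∀ i, (w i).IsHomogeneous e) (k : ℕ) :
    ((lineP F v w).coeff k).IsHomogeneous (n * e) := by
  have hbase : ∀ i k, ((Polynomial.C (v i) + Polynomial.C (w i) * Polynomial.X).coeff
      k).IsHomogeneous e := by
    intro i k
    rw [Polynomial.coeff_add, Polynomial.coeff_C, Polynomial.coeff_C_mul, Polynomial.coeff_X]
    refine MvPolynomial.IsHomogeneous.add ?_ ?_
    · split_ifs
      · exact hv i
      · exact MvPolynomial.isHomogeneous_zero _ _ _
    · split_ifs
      · simpa using hw i
      · simpa using MvPolynomial.isHomogeneous_zero _ _ _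
  rw [lineP_eq_sum, Polynomial.finsetSum_coeff]
  refine MvPolynomial.IsHomogeneous.sum _ _ _ fun d hd => ?_
  rw [Polynomial.coeff_C_mul, ← sum_eq_of_mem_support hF hd, Finset.sum_mul]
  refine MvPolynomial.IsHomogeneous.C_mul ?_ _
  rw [Fin.prod_univ_three, Fin.sum_univ_three]
  exact coeff_isHomogeneous_mul (coeff_isHomogeneous_mul (coeff_isHomogeneous_pow (hbase 0) _)
    (coeff_isHomogeneous_pow (hbase 1) _)) (coeff_isHomogeneous_pow (hbase 2) _) k

lemma resultant_isHomogeneous {f g : Polynomial (MvPolynomial (Fin 3) K)} {e : ℕ}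
    (hf : ∀ k, (f.coeff k).IsHomogeneous e) (hg : ∀ k, (g.coeff k).IsHomogeneous e) (m n : ℕ) :
    (Polynomial.resultant f g m n).IsHomogeneous ((m + n) * e) := by
  rw [Polynomial.resultant, Matrix.det_apply]
  refine MvPolynomial.IsHomogeneous.sum _ _ _ fun σ _ => ?_
  have h : ∀ i j, (Polynomial.sylvester f g m n i j).IsHomogeneous e := by
    intro i j
    induction j using Fin.addCases <;> simp only [Polynomial.sylvester, Matrix.of_apply,
      Fin.addCases_left, Fin.addCases_right] <;> split_ifs
    · exact hg _
    · exact MvPolynomial.isHomogeneous_zero _ _ _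
    · exact hf _
    · exact MvPolynomial.isHomogeneous_zero _ _ _
  have hp := MvPolynomial.IsHomogeneous.prod Finset.univ
    (fun i => Polynomial.sylvester f g m n (σ i) i) (fun _ => e) fun i _ => h _ _
  rw [Finset.sum_const, Finset.card_univ, Fintype.card_fin, smul_eq_mul] at hp
  rcases Int.units_eq_one_or (Equiv.Perm.sign σ) with hs | hs
  · rw [hs, one_smul]; exact hp
  · rw [hs, Units.neg_smul, one_smul]; exact hp.neg

lemma coeff_derivative_isHomogeneous {f : Polynomial (MvPolynomial (Fin 3) K)} {e : ℕ}
    (hf : ∀ k, (f.coeff k).IsHomogeneous e) (k : ℕ) : (f.derivative.coeff k).IsHomogeneous e := by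
  rw [Polynomial.coeff_derivative]
  have h := (hf (k + 1)).mul (MvPolynomial.isHomogeneous_C (Fin 3) ((k : K) + 1))
  simpa using h

/-- The automorphism `X ↦ X + T • Q` of `K[X][T]`, as a ring homomorphism. -/
noncomputable def shiftHom (Q : Fin 3 → K) :
    Polynomial (MvPolynomial (Fin 3) K) →+* Polynomial (MvPolynomial (Fin 3) K) :=
  Polynomial.eval₂RingHom
    ((MvPolynomial.aeval fun i => Polynomial.C (MvPolynomial.X i) +
      Polynomial.C (MvPolynomial.C (Q i)) * Polynomial.X : MvPolynomial (Fin 3) K →ₐ[K]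
        Polynomial (MvPolynomial (Fin 3) K)) : MvPolynomial (Fin 3) K →+*
        Polynomial (MvPolynomial (Fin 3) K)) Polynomial.X

lemma shiftHom_C (Q : Fin 3 → K) (F : MvPolynomial (Fin 3) K) :
    shiftHom Q (Polynomial.C F) =
      lineP F MvPolynomial.X fun i => (MvPolynomial.C (Q i) : MvPolynomial (Fin 3) K) := by
  rw [shiftHom, Polynomial.coe_eval₂RingHom, Polynomial.eval₂_C]
  rfl

lemma shiftHom_X (Q : Fin 3 → K) : shiftHom Q Polynomial.X = Polynomial.X := by
  rw [shiftHom, Polynomial.coe_eval₂RingHom, Polynomial.eval₂_X]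

lemma shiftHom_C_C (Q : Fin 3 → K) (a : K) :
    shiftHom Q (Polynomial.C (MvPolynomial.C a)) = Polynomial.C (MvPolynomial.C a) := by
  rw [shiftHom_C, lineP, MvPolynomial.aeval_C]
  rfl

lemma shiftHom_C_X (Q : Fin 3 → K) (i : Fin 3) :
    shiftHom Q (Polynomial.C (MvPolynomial.X i)) =
      Polynomial.C (MvPolynomial.X i) + Polynomial.C (MvPolynomial.C (Q i)) * Polynomial.X := by
  rw [shiftHom_C, lineP, MvPolynomial.aeval_X]

lemma shiftHom_comp (Q Q' : Fin 3 → K) (h : Q + Q' = 0) :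
    (shiftHom Q).comp (shiftHom Q') = RingHom.id _ := by
  refine Polynomial.ringHom_ext' (MvPolynomial.ringHom_ext (fun a => ?_) fun i => ?_) ?_
  · simp only [RingHom.comp_apply, shiftHom_C_C, RingHom.id_apply]
  · have hi : Q' i = -Q i := by
      have := congrFun h i
      simp only [Pi.add_apply, Pi.zero_apply] at this
      linear_combination this
    simp only [RingHom.comp_apply, shiftHom_C_X, map_add, map_mul, shiftHom_C_C, shiftHom_X,
      RingHom.id_apply, hi, map_neg]
    ring
  · simp only [RingHom.comp_apply, shiftHom_X, RingHom.id_apply]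

lemma prime_lineP_X {Φ : MvPolynomial (Fin 3) K} (hΦ : Irreducible Φ) (P : Fin 3 → K) :
    Prime (lineP Φ MvPolynomial.X fun i => (MvPolynomial.C (P i) : MvPolynomial (Fin 3) K)) := by
  rw [← shiftHom_C]
  let τ := RingEquiv.ofRingHom (shiftHom P) (shiftHom (-P)) (shiftHom_comp _ _ (by simp))
    (shiftHom_comp _ _ (by simp))
  exact (MulEquiv.prime_iff τ.toMulEquiv).mpr (Polynomial.prime_C_iff.mpr hΦ.prime)

lemma aeval_C_comp (F : MvPolynomial (Fin 3) K) (P : Fin 3 → K) :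
    MvPolynomial.aeval (fun i => (MvPolynomial.C (P i) : MvPolynomial (Fin 3) K)) F =
      MvPolynomial.C (MvPolynomial.eval P F) := by
  induction F using MvPolynomial.induction_on with
  | C a => rw [MvPolynomial.aeval_C, MvPolynomial.eval_C]; rfl
  | add p q hp hq => simp only [map_add, hp, hq]
  | mul_X p j hp => simp only [map_mul, MvPolynomial.aeval_X, MvPolynomial.eval_X, hp]

/-- The line through a point `P` off an irreducible curve `Φ = 0` and the generic point of the
plane meets the curve in distinct points: the restriction of `Φ` to it is, up to the automorphism
`X ↦ X + T • P`, the irreducible polynomial `Φ` itself, hence separable by Gauss's lemma. -/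
lemma generic_resultant_ne_zero [CharZero K] {Φ : MvPolynomial (Fin 3) K} {n : ℕ}
    (hΦ : Irreducible Φ) (hhom : Φ.IsHomogeneous n) {P : Fin 3 → K}
    (hP : MvPolynomial.eval P Φ ≠ 0) :
    Polynomial.resultant
      (lineP Φ MvPolynomial.X fun i => (MvPolynomial.C (P i) : MvPolynomial (Fin 3) K))
      (lineP Φ MvPolynomial.X fun i => (MvPolynomial.C (P i) : MvPolynomial (Fin 3) K)).derivative
      n (n - 1) ≠ 0 := by
  have hprime := prime_lineP_X hΦ P
  have hcoeff := lineP_coeff hhom MvPolynomial.X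
    fun i => (MvPolynomial.C (P i) : MvPolynomial (Fin 3) K)
  have hdeg := lineP_natDegree_le hhom MvPolynomial.X
    fun i => (MvPolynomial.C (P i) : MvPolynomial (Fin 3) K)
  rw [aeval_C_comp] at hcoeff
  generalize lineP Φ MvPolynomial.X
    (fun i => (MvPolynomial.C (P i) : MvPolynomial (Fin 3) K)) = Ψ at *
  have hcoeff0 : Ψ.coeff n ≠ 0 := by
    rw [hcoeff]
    simpa using hP
  have hdeg' : Ψ.natDegree = n :=
    le_antisymm hdeg (Polynomial.le_natDegree_of_ne_zero hcoeff0)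
  have hprim : Ψ.IsPrimitive := by
    intro r hr
    have h1 := (Polynomial.C_dvd_iff_dvd_coeff _ _).mp hr n
    rw [hcoeff] at h1
    exact isUnit_of_dvd_unit h1 ((isUnit_iff_ne_zero.mpr hP).map MvPolynomial.C)
  let _ : StrongNormalizationMonoid (MvPolynomial (Fin 3) K) :=
    UniqueFactorizationMonoid.strongNormalizationMonoid
  let _ : NormalizedGCDMonoid (MvPolynomial (Fin 3) K) :=
    UniqueFactorizationMonoid.toNormalizedGCDMonoid _
  have hinj := IsFractionRing.injective (MvPolynomial (Fin 3) K)
    (FractionRing (MvPolynomial (Fin 3) K))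
  have hirr : Irreducible (Ψ.map (algebraMap (MvPolynomial (Fin 3) K)
      (FractionRing (MvPolynomial (Fin 3) K)))) :=
    (hprim.irreducible_iff_irreducible_map_fraction_map).mp hprime.irreducible
  have : CharZero (FractionRing (MvPolynomial (Fin 3) K)) :=
    charZero_of_injective_algebraMap hinj
  have hres := Polynomial.resultant_ne_zero _ _ hirr.separable
  rw [Polynomial.natDegree_derivative, Polynomial.derivative_map, Polynomial.resultant_map_map,
    Polynomial.natDegree_map_eq_of_injective hinj, hdeg'] at hres
  intro h0
  rw [h0, map_zero] at hres
  exact hres rfl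

lemma separable_of_resultant_ne_zero [CharZero K] {f : Polynomial K} {n : ℕ}
    (hf0 : f ≠ 0)
    (hf : f.natDegree = n) (h : Polynomial.resultant f f.derivative n (n - 1) ≠ 0) :
    f.Separable := by
  by_contra hs
  apply h
  have hf' : f.derivative.natDegree = n - 1 := by rw [Polynomial.natDegree_derivative, hf]
  rw [← hf', ← hf, Polynomial.resultant_eq_zero_iff]
  exact ⟨Or.inl hf0, hs⟩

/-- A form in the coefficients of a line `l` which, when it does not vanish at `l`, ensures that
the points `l ⨯₃ B` and `l ⨯₃ A` span `l` and that `Φ` restricted to the corresponding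
parametrization of `l` is a separable polynomial of degree `n`. -/
noncomputable def transForm (Φ : MvPolynomial (Fin 3) K) (n : ℕ) (A B : Fin 3 → K) :
    MvPolynomial (Fin 3) K :=
  Polynomial.resultant
      (lineP Φ (MvPolynomial.X ⨯₃ (fun i => MvPolynomial.C (B i)))
        (MvPolynomial.X ⨯₃ (fun i => MvPolynomial.C (A i))))
      (lineP Φ (MvPolynomial.X ⨯₃ (fun i => MvPolynomial.C (B i)))
        (MvPolynomial.X ⨯₃ (fun i => MvPolynomial.C (A i)))).derivative n (n - 1) *
    MvPolynomial.aeval (MvPolynomial.X ⨯₃ (fun i => MvPolynomial.C (A i))) Φ *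
    linearForm (A ⨯₃ B)

lemma crossC_isHomogeneous (A : Fin 3 → K) (i : Fin 3) :
    ((MvPolynomial.X ⨯₃ (fun i => MvPolynomial.C (A i)) : Fin 3 → MvPolynomial (Fin 3) K)
      i).IsHomogeneous 1 := by
  have h : ∀ a b : Fin 3, (MvPolynomial.X a * MvPolynomial.C (A b) :
      MvPolynomial (Fin 3) K).IsHomogeneous 1 := fun a b =>
    (MvPolynomial.isHomogeneous_X K a).mul (MvPolynomial.isHomogeneous_C (Fin 3) (A b))
  fin_cases i <;> simpa [cross_apply] using (h _ _).sub (h _ _)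

lemma transForm_isHomogeneous {Φ : MvPolynomial (Fin 3) K} {n : ℕ} (hΦ : Φ.IsHomogeneous n)
    (A B : Fin 3 → K) : (transForm Φ n A B).IsHomogeneous
      ((n + (n - 1)) * (n * 1) + 1 * n + 1) :=
  ((resultant_isHomogeneous
      (lineP_coeff_isHomogeneous hΦ (crossC_isHomogeneous B) (crossC_isHomogeneous A))
      (coeff_derivative_isHomogeneous
        (lineP_coeff_isHomogeneous hΦ (crossC_isHomogeneous B) (crossC_isHomogeneous A)))
      _ _).mul (hΦ.aeval _ (crossC_isHomogeneous A))).mul (linearForm_isHomogeneous _)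

lemma aeval_crossC (l A : Fin 3 → K) (i : Fin 3) :
    MvPolynomial.aeval l ((MvPolynomial.X ⨯₃ (fun i => MvPolynomial.C (A i)) :
      Fin 3 → MvPolynomial (Fin 3) K) i) = (l ⨯₃ A) i := by
  fin_cases i <;> simp [cross_apply]

lemma eval_transForm (Φ : MvPolynomial (Fin 3) K) (n : ℕ) (A B l : Fin 3 → K) :
    MvPolynomial.eval l (transForm Φ n A B) =
      Polynomial.resultant (linePoly Φ (l ⨯₃ B) (l ⨯₃ A))
        (linePoly Φ (l ⨯₃ B) (l ⨯₃ A)).derivative n (n - 1) *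
      MvPolynomial.eval (l ⨯₃ A) Φ * ((A ⨯₃ B) ⬝ᵥ l) := by
  have h1 : ∀ C : Fin 3 → K, (fun i => MvPolynomial.aeval l
      ((MvPolynomial.X ⨯₃ (fun i => MvPolynomial.C (C i)) :
        Fin 3 → MvPolynomial (Fin 3) K) i)) = l ⨯₃ C := fun C => funext (aeval_crossC l C)
  have h2 := lineP_map (MvPolynomial.aeval l : MvPolynomial (Fin 3) K →ₐ[K] K) Φ
    (MvPolynomial.X ⨯₃ (fun i => MvPolynomial.C (B i)))
    (MvPolynomial.X ⨯₃ (fun i => MvPolynomial.C (A i)))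
  rw [h1, h1] at h2
  rw [transForm, map_mul, map_mul, eval_linearForm, eval_aeval]
  congr 2
  · rw [← lineP_eq_linePoly, ← h2, Polynomial.derivative_map, Polynomial.resultant_map_map]
    rfl
  · exact congrArg (fun x => MvPolynomial.eval x Φ) (h1 A)


/-- A nonzero polynomial is nonzero at some point off the line `X 0 = 0`. -/
lemma exists_eval_ne_zero [CharZero K] {F : MvPolynomial (Fin 3) K} (hF : F ≠ 0) :
    ∃ x : Fin 3 → K, MvPolynomial.eval x F ≠ 0 ∧ x 0 ≠ 0 := by
  by_contra! h
  refine mul_ne_zero hF (MvPolynomial.X_ne_zero 0) (MvPolynomial.funext fun x => ?_)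
  rw [map_mul, MvPolynomial.eval_X, map_zero, mul_eq_zero]
  exact or_iff_not_imp_left.mpr (h x)

lemma exists_transForm_ne_zero [CharZero K] {Φ : MvPolynomial (Fin 3) K} {n : ℕ}
    (hΦ : Irreducible Φ) (hhom : Φ.IsHomogeneous n) :
    ∃ A B l : Fin 3 → K, MvPolynomial.eval l (transForm Φ n A B) ≠ 0 := by
  obtain ⟨P, hP1, hP0⟩ := exists_eval_ne_zero hΦ.ne_zero
  have hlin : (linearForm ![-P 1, P 0, 0] : MvPolynomial (Fin 3) K) ≠ 0 := by
    intro h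
    have := eval_linearForm ![-P 1, P 0, 0] ![0, 1, 0]
    rw [h, map_zero] at this
    simp [dotProduct, Fin.sum_univ_three] at this
    exact hP0 this.symm
  obtain ⟨x, hx, -⟩ := exists_eval_ne_zero (mul_ne_zero (generic_resultant_ne_zero hΦ hhom hP1) hlin)
  rw [map_mul, eval_linearForm] at hx
  have hx1 := left_ne_zero_of_mul hx
  have hx2 := right_ne_zero_of_mul hx
  set δ : K := x 1 * P 0 - P 1 * x 0 with hδ
  have hδ0 : δ ≠ 0 := by
    intro h
    apply hx2
    simp [dotProduct, Fin.sum_univ_three]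
    rw [hδ] at h
    linear_combination h
  -- dual vectors: `A` vanishes at `P` and is `1` at `x`; `B` vanishes at `x` and is `-1` at `P`
  have hA : (x ⨯₃ P) ⨯₃ ![-P 1 / δ, P 0 / δ, 0] = P := by
    ext i
    fin_cases i <;> simp [cross_apply] <;> field_simp <;> rw [hδ] <;> ring
  have hB : (x ⨯₃ P) ⨯₃ ![-x 1 / δ, x 0 / δ, 0] = x := by
    ext i
    fin_cases i <;> simp [cross_apply] <;> field_simp <;> rw [hδ] <;> ring
  refine ⟨![-P 1 / δ, P 0 / δ, 0], ![-x 1 / δ, x 0 / δ, 0], x ⨯₃ P, ?_⟩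
  rw [eval_transForm, hA, hB]
  refine mul_ne_zero (mul_ne_zero ?_ hP1) ?_
  · have h2 := lineP_map (MvPolynomial.aeval x : MvPolynomial (Fin 3) K →ₐ[K] K) Φ
      MvPolynomial.X fun i => MvPolynomial.C (P i)
    simp only [MvPolynomial.aeval_X, MvPolynomial.algHom_C, Algebra.algebraMap_self,
      RingHom.id_apply] at h2
    rw [← lineP_eq_linePoly, ← h2, Polynomial.derivative_map, Polynomial.resultant_map_map]
    exact hx1
  · have : (![-P 1 / δ, P 0 / δ, 0] ⨯₃ ![-x 1 / δ, x 0 / δ, 0]) ⬝ᵥ (x ⨯₃ P) = -1 := by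
      simp [cross_apply, dotProduct, Fin.sum_univ_three]
      field_simp
      rw [hδ]; ring
    rw [this]
    exact neg_ne_zero.mpr one_ne_zero

/-- The line `l` is spanned by `u` and `w`, the point `u` lies off the curve `Φ = 0`, and the
points `w + t • u` of the curve correspond to simple roots. -/
structure Transversal (Φ : MvPolynomial (Fin 3) K) (l u w : Fin 3 → K) : Prop where
  dot_u : l ⬝ᵥ u = 0
  dot_w : l ⬝ᵥ w = 0
  eval_u : MvPolynomial.eval u Φ ≠ 0
  indep : u ⨯₃ w ≠ 0
  span : ∀ x, l ⬝ᵥ x = 0 → ∃ α β : K, x = α • w + β • u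
  sep : (linePoly Φ w u).Separable

lemma linePoly_natDegree {Φ : MvPolynomial (Fin 3) K} {n : ℕ} (hhom : Φ.IsHomogeneous n)
    {u : Fin 3 → K} (w : Fin 3 → K) (hu : MvPolynomial.eval u Φ ≠ 0) :
    (linePoly Φ w u).natDegree = n := by
  rw [← lineP_eq_linePoly]
  refine le_antisymm (lineP_natDegree_le hhom _ _) (Polynomial.le_natDegree_of_ne_zero ?_)
  rw [lineP_coeff hhom]
  exact hu

lemma linePoly_ne_zero {Φ : MvPolynomial (Fin 3) K} {n : ℕ} (hhom : Φ.IsHomogeneous n)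
    {u : Fin 3 → K} (w : Fin 3 → K) (hu : MvPolynomial.eval u Φ ≠ 0) : linePoly Φ w u ≠ 0 := by
  intro h
  have := lineP_coeff hhom w u
  rw [lineP_eq_linePoly, h, Polynomial.coeff_zero] at this
  exact hu this.symm

lemma transversal_of_transForm_ne_zero [CharZero K] {Φ : MvPolynomial (Fin 3) K} {n : ℕ}
    (hhom : Φ.IsHomogeneous n) {A B l : Fin 3 → K}
    (h : MvPolynomial.eval l (transForm Φ n A B) ≠ 0) :
    Transversal Φ l (l ⨯₃ A) (l ⨯₃ B) := by
  rw [eval_transForm] at h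
  have h1 := left_ne_zero_of_mul (left_ne_zero_of_mul h)
  have h2 := right_ne_zero_of_mul (left_ne_zero_of_mul h)
  have h3 := right_ne_zero_of_mul h
  refine ⟨by simp, by simp, h2, ?_, ?_, ?_⟩
  · -- `(l ⨯ A) ⨯ (l ⨯ B)` is the multiple `(A ⨯ B) ⬝ l` of `l`
    have hl : l ≠ 0 := by rintro rfl; simp at h3
    have : (l ⨯₃ A) ⨯₃ (l ⨯₃ B) = ((A ⨯₃ B) ⬝ᵥ l) • l := by
      ext i
      fin_cases i <;> simp [cross_apply, dotProduct, Fin.sum_univ_three] <;> ring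
    rw [this]
    exact smul_ne_zero h3 hl
  · intro x hx
    refine ⟨-(A ⬝ᵥ x) / ((A ⨯₃ B) ⬝ᵥ l) , (B ⬝ᵥ x) / ((A ⨯₃ B) ⬝ᵥ l), ?_⟩
    have key : ((A ⨯₃ B) ⬝ᵥ l) • x = (-(A ⬝ᵥ x)) • (l ⨯₃ B) + (B ⬝ᵥ x) • (l ⨯₃ A) := by
      simp only [dotProduct, Fin.sum_univ_three] at hx
      ext i
      fin_cases i <;> simp [cross_apply, dotProduct, Fin.sum_univ_three]
      · linear_combination ((A 1 * B 2 - A 2 * B 1)) * hx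
      · linear_combination ((A 2 * B 0 - A 0 * B 2)) * hx
      · linear_combination ((A 0 * B 1 - A 1 * B 0)) * hx
    rw [div_eq_inv_mul, div_eq_inv_mul, mul_smul, mul_smul, ← smul_add, ← key, inv_smul_smul₀ h3]
  · exact separable_of_resultant_ne_zero (linePoly_ne_zero hhom _ h2)
      (linePoly_natDegree hhom _ h2) h1

/-- A general line meets an irreducible curve transversally. -/
lemma genericLines_transversal [CharZero K] {Φ : MvPolynomial (Fin 3) K} {n : ℕ}
    (hΦ : Irreducible Φ) (hhom : Φ.IsHomogeneous n) {s : ℕ} (i : Fin s) :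
    GenericLines K s (fun l => ∃ u w, Transversal Φ (l i) u w) := by
  obtain ⟨A, B, l, hl⟩ := exists_transForm_ne_zero hΦ hhom
  exact genericLines_mono (genericLines_single (transForm_isHomogeneous hhom A B) hl i)
    fun _ h => ⟨_, _, transversal_of_transForm_ne_zero hhom h⟩


lemma eval_rep_mk {F : MvPolynomial (Fin 3) K} {n : ℕ} (hF : F.IsHomogeneous n) {v : Fin 3 → K}
    (hv : v ≠ 0) :
    MvPolynomial.eval (Projectivization.mk K v hv).rep F = 0 ↔ MvPolynomial.eval v F = 0 := by
  obtain ⟨a, ha⟩ := Projectivization.exists_smul_eq_mk_rep K v hv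
  rw [← ha, Units.smul_def, eval_smul_of_isHomogeneous hF]
  simp

lemma onLine_iff (g : Fin 3 → K) (q : P2 K) : OnLine g q ↔ g ⬝ᵥ q.rep = 0 := Iff.rfl

lemma onLine_mk (g : Fin 3 → K) {v : Fin 3 → K} (hv : v ≠ 0) :
    OnLine g (Projectivization.mk K v hv) ↔ g ⬝ᵥ v = 0 := by
  rw [onLine_iff, ← eval_linearForm, ← eval_linearForm,
    eval_rep_mk (linearForm_isHomogeneous g)]

namespace Transversal

variable {Φ : MvPolynomial (Fin 3) K} {l u w : Fin 3 → K}

lemma cross_add (u w : Fin 3 → K) (t : K) : u ⨯₃ (w + t • u) = u ⨯₃ w := by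
  rw [map_add, map_smul, cross_self, smul_zero, add_zero]

lemma point_ne_zero (h : Transversal Φ l u w) (t : K) : w + t • u ≠ 0 := by
  intro h0
  apply h.indep
  rw [← cross_add u w t, h0, map_zero]

lemma exists_point {n : ℕ} (h : Transversal Φ l u w) (hhom : Φ.IsHomogeneous n) {q : P2 K}
    (hl : OnLine l q) (hq : MvPolynomial.eval q.rep Φ = 0) :
    ∃ (α t : K), α ≠ 0 ∧ q.rep = α • (w + t • u) := by
  obtain ⟨α, β, hαβ⟩ := h.span _ hl
  have hα : α ≠ 0 := by
    rintro rfl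
    rw [zero_smul, zero_add] at hαβ
    rw [hαβ, eval_smul_of_isHomogeneous hhom] at hq
    have hβ : β = 0 := eq_zero_of_pow_eq_zero ((mul_eq_zero.mp hq).resolve_right h.eval_u)
    rw [hβ, zero_smul] at hαβ
    exact q.rep_nonzero hαβ
  refine ⟨α, α⁻¹ * β, hα, ?_⟩
  rw [hαβ, smul_add, smul_smul, mul_inv_cancel_left₀ hα]

lemma ncard_inter [IsAlgClosed K] {n : ℕ} (h : Transversal Φ l u w) (hhom : Φ.IsHomogeneous n) :
    ∃ S : Finset (P2 K), S.card = n ∧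
      ∀ q, q ∈ S ↔ OnLine l q ∧ MvPolynomial.eval q.rep Φ = 0 := by
  classical
  refine ⟨(linePoly Φ w u).roots.toFinset.image
    fun t => Projectivization.mk K (w + t • u) (h.point_ne_zero t), ?_, fun q => ?_⟩
  · rw [Finset.card_image_of_injective, Multiset.toFinset_card_of_nodup
      (Polynomial.nodup_roots h.sep), ← linePoly_natDegree hhom w h.eval_u]
    · exact ((IsAlgClosed.splits _).natDegree_eq_card_roots).symm
    · intro t t' htt
      obtain ⟨a, ha⟩ := (Projectivization.mk_eq_mk_iff' K _ _ _ _).mp htt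
      have ha1 : a = 1 := by
        have h1 := congrArg (fun x => u ⨯₃ x) ha
        simp only [map_smul, cross_add] at h1
        have h2 : (a - 1) • (u ⨯₃ w) = 0 := by rw [sub_smul, h1, one_smul, sub_self]
        exact sub_eq_zero.mp ((smul_eq_zero.mp h2).resolve_right h.indep)
      rw [ha1, one_smul, add_right_inj] at ha
      have hu : u ≠ 0 := by
        rintro rfl
        exact h.indep (by simp)
      exact (smul_left_injective K hu ha).symm
  · rw [Finset.mem_image]
    simp only [Multiset.mem_toFinset, Polynomial.mem_roots (linePoly_ne_zero hhom w h.eval_u),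
      Polynomial.IsRoot.def, linePoly_eval]
    constructor
    · rintro ⟨t, ht, rfl⟩
      refine ⟨(onLine_mk _ _).mpr ?_, (eval_rep_mk hhom _).mpr ht⟩
      rw [dotProduct_add, dotProduct_smul, h.dot_u, h.dot_w, smul_zero, add_zero]
    · rintro ⟨hl, hq⟩
      obtain ⟨α, t, hα, hαt⟩ := h.exists_point hhom hl hq
      refine ⟨t, ?_, ?_⟩
      · rw [hαt, eval_smul_of_isHomogeneous hhom] at hq
        exact (mul_eq_zero.mp hq).resolve_left (pow_ne_zero _ hα)
      · rw [← q.mk_rep, eq_comm, Projectivization.mk_eq_mk_iff']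
        exact ⟨α, hαt.symm⟩

/-- At each intersection point, the line is not tangent to the curve. -/
lemma grad_dotProduct_ne_zero {n : ℕ} (h : Transversal Φ l u w) (hhom : Φ.IsHomogeneous n)
    {q : P2 K} (hl : OnLine l q) (hq : MvPolynomial.eval q.rep Φ = 0) :
    grad Φ q.rep ⬝ᵥ u ≠ 0 := by
  obtain ⟨α, t, hα, hαt⟩ := h.exists_point hhom hl hq
  have hg : grad Φ q.rep = α ^ (n - 1) • grad Φ (w + t • u) := by
    ext i
    rw [hαt, Pi.smul_apply, smul_eq_mul]
    exact eval_smul_of_isHomogeneous hhom.pderiv _ _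
  rw [hαt, eval_smul_of_isHomogeneous hhom] at hq
  have hroot : (linePoly Φ w u).eval t = 0 := by
    rw [linePoly_eval]
    exact (mul_eq_zero.mp hq).resolve_left (pow_ne_zero _ hα)
  rw [hg, smul_dotProduct, smul_eq_mul, ← linePoly_derivative_eval]
  exact mul_ne_zero (pow_ne_zero _ hα) (h.sep.eval₂_derivative_ne_zero (RingHom.id K) hroot)

lemma not_linearForm_dvd (h : Transversal Φ l u w) : ¬ linearForm l ∣ Φ := by
  rintro ⟨G, rfl⟩
  apply h.eval_u
  rw [map_mul, eval_linearForm, h.dot_u, zero_mul]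

end Transversal

/-! ### Arrangements in general position -/

/-- The lines `l i` are in general position with respect to the curve `Φ = 0`: each of them meets
the curve transversally, no two of them meet on the curve, and no three are concurrent. -/
structure GeneralPosition (Φ : MvPolynomial (Fin 3) K) {s : ℕ} (l : Fin s → Fin 3 → K) :
    Prop where
  ne_zero : ∀ i, l i ≠ 0
  transversal : ∀ i, ∃ u w, Transversal Φ (l i) u w
  pair : ∀ i j, i ≠ j → MvPolynomial.eval (l i ⨯₃ l j) Φ ≠ 0
  triple : ∀ i j k, i ≠ j → i ≠ k → j ≠ k → l k ⬝ᵥ (l i ⨯₃ l j) ≠ 0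

lemma exists_smul_eq_cross {l m x : Fin 3 → K} (hx : x ≠ 0) (hl : l ⬝ᵥ x = 0) (hm : m ⬝ᵥ x = 0) :
    ∃ c : K, l ⨯₃ m = c • x := by
  have key : ∀ i j, (l ⨯₃ m) i * x j = (l ⨯₃ m) j * x i := by
    simp only [dotProduct, Fin.sum_univ_three] at hl hm
    intro i j
    fin_cases i <;> fin_cases j <;> simp [cross_apply]
    · linear_combination m 2 * hl - l 2 * hm
    · linear_combination l 1 * hm - m 1 * hl
    · linear_combination l 2 * hm - m 2 * hl
    · linear_combination m 0 * hl - l 0 * hm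
    · linear_combination m 1 * hl - l 1 * hm
    · linear_combination l 0 * hm - m 0 * hl
  obtain ⟨k, hk⟩ := Function.ne_iff.mp hx
  refine ⟨(l ⨯₃ m) k / x k, funext fun i => ?_⟩
  rw [Pi.smul_apply, smul_eq_mul, div_mul_eq_mul_div, eq_div_iff hk]
  exact key i k

lemma linearForm_ne_zero {g : Fin 3 → K} (hg : g ≠ 0) : linearForm g ≠ 0 := by
  intro h
  apply hg
  rw [← grad_linearForm g 0, h]
  ext i
  simp [grad]

lemma irreducible_linearForm {g : Fin 3 → K} (hg : g ≠ 0) : Irreducible (linearForm g) := by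
  refine MvPolynomial.irreducible_of_totalDegree_eq_one
    ((linearForm_isHomogeneous g).totalDegree (linearForm_ne_zero hg)) fun x hx => ?_
  rw [isUnit_iff_ne_zero]
  rintro rfl
  refine linearForm_ne_zero hg (MvPolynomial.ext _ _ fun d => ?_)
  rw [MvPolynomial.coeff_zero]
  exact zero_dvd_iff.mp (hx d)

lemma isRelPrime_linearForm {g h : Fin 3 → K} (hg : g ≠ 0) (hgh : g ⨯₃ h ≠ 0) :
    IsRelPrime (linearForm g) (linearForm h) := by
  rw [(irreducible_linearForm hg).isRelPrime_iff_not_dvd]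
  rintro ⟨G, hG⟩
  -- every point `e ⨯₃ g` of the line `g` would lie on `h`
  have key : ∀ e : Fin 3 → K, e ⬝ᵥ (g ⨯₃ h) = 0 := by
    intro e
    have h1 := congrArg (MvPolynomial.eval (e ⨯₃ g)) hG
    rw [map_mul, eval_linearForm, eval_linearForm, dot_cross_self, zero_mul] at h1
    rw [triple_product_permutation, triple_product_permutation]
    exact h1
  apply hgh
  ext i
  simpa using key (Pi.single i 1)

namespace GeneralPosition

variable {Φ : MvPolynomial (Fin 3) K} {s n : ℕ} {l : Fin s → Fin 3 → K}

lemma cross_ne_zero (h : GeneralPosition Φ l) (hhom : Φ.IsHomogeneous n) (hn : 1 ≤ n)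
    {i j : Fin s} (hij : i ≠ j) : l i ⨯₃ l j ≠ 0 := by
  intro h0
  apply h.pair i j hij
  have := eval_smul_of_isHomogeneous hhom 0 (0 : Fin 3 → K)
  rw [zero_pow (by omega), zero_mul, zero_smul] at this
  rw [h0, this]

lemma squarefree (h : GeneralPosition Φ l) (hΦ : Irreducible Φ) (hhom : Φ.IsHomogeneous n)
    (hn : 1 ≤ n) : Squarefree (Φ * ∏ i, linearForm (l i)) := by
  rw [squarefree_mul_iff]
  refine ⟨IsRelPrime.prod_right fun i _ => ?_, hΦ.squarefree,
    Finset.squarefree_prod_of_pairwise_isCoprime (fun i _ j _ hij => ?_)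
      fun i _ => (irreducible_linearForm (h.ne_zero i)).squarefree⟩
  · obtain ⟨u, w, ht⟩ := h.transversal i
    exact ((irreducible_linearForm (h.ne_zero i)).isRelPrime_iff_not_dvd.mpr
      ht.not_linearForm_dvd).symm
  · exact isRelPrime_linearForm (h.ne_zero i) (h.cross_ne_zero hhom hn hij)

/-- Three lines through a common point are not distinct. -/
lemma eq_or_eq (h : GeneralPosition Φ l) {i j k : Fin s} (hij : i ≠ j) {q : P2 K}
    (hi : OnLine (l i) q) (hj : OnLine (l j) q) (hk : OnLine (l k) q) : k = i ∨ k = j := by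
  by_contra! hne
  obtain ⟨c, hc⟩ := exists_smul_eq_cross q.rep_nonzero hi hj
  apply h.triple i j k hij hne.1.symm hne.2.symm
  rw [hc, dotProduct_smul, (onLine_iff _ _).mp hk, smul_zero]

lemma eval_ne_zero (h : GeneralPosition Φ l) (hhom : Φ.IsHomogeneous n) {i j : Fin s}
    (hij : i ≠ j) {q : P2 K} (hi : OnLine (l i) q) (hj : OnLine (l j) q) :
    MvPolynomial.eval q.rep Φ ≠ 0 := by
  intro h0
  obtain ⟨c, hc⟩ := exists_smul_eq_cross q.rep_nonzero hi hj
  apply h.pair i j hij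
  rw [hc, eval_smul_of_isHomogeneous hhom, h0, mul_zero]

lemma eval_prod_ne_zero {x : Fin 3 → K} {S : Finset (Fin s)} (h : ∀ i ∈ S, l i ⬝ᵥ x ≠ 0) :
    MvPolynomial.eval x (∏ i ∈ S, linearForm (l i)) ≠ 0 := by
  rw [map_prod, Finset.prod_ne_zero_iff]
  intro i hi
  rw [eval_linearForm]
  exact h i hi

lemma ordinary_curve_line [CharZero K] (h : GeneralPosition Φ l) (hhom : Φ.IsHomogeneous n)
    {i : Fin s} {q : P2 K} (hi : OnLine (l i) q) (hq : MvPolynomial.eval q.rep Φ = 0) :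
    OrdinaryAt (Φ * ∏ i, linearForm (l i)) q 2 := by
  obtain ⟨u, w, ht⟩ := h.transversal i
  have hu := ht.grad_dotProduct_ne_zero hhom hi hq
  rw [← Finset.mul_prod_erase Finset.univ _ (Finset.mem_univ i), ← mul_assoc]
  refine ordinaryAtVec_mul (ordinaryAtVec_two_mul hhom (linearForm_isHomogeneous _) hq
    (by rw [eval_linearForm]; exact hi) (fun a ha => ?_) fun a ha => ?_)
    (eval_prod_ne_zero fun j hj h0 => ?_)
  · rw [grad_linearForm] at ha
    rw [ha, smul_dotProduct, ht.dot_u, smul_zero] at hu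
    exact hu rfl
  · rw [grad_linearForm] at ha
    have h1 := ht.dot_u
    rw [ha, smul_dotProduct, smul_eq_mul] at h1
    have ha0 : a = 0 := (mul_eq_zero.mp h1).resolve_right hu
    exact h.ne_zero i (by rw [ha, ha0, zero_smul])
  · exact h.eval_ne_zero hhom (Finset.ne_of_mem_erase hj) h0 hi hq

lemma ordinary_line_line [CharZero K] (h : GeneralPosition Φ l) (hhom : Φ.IsHomogeneous n)
    (hn : 1 ≤ n) {i j : Fin s} (hij : i ≠ j) {q : P2 K} (hi : OnLine (l i) q)
    (hj : OnLine (l j) q) : OrdinaryAt (Φ * ∏ i, linearForm (l i)) q 2 := by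
  have hF : Φ * ∏ i, linearForm (l i) = linearForm (l i) * linearForm (l j) *
      (Φ * ∏ k ∈ (Finset.univ.erase i).erase j, linearForm (l k)) := by
    rw [← Finset.mul_prod_erase Finset.univ _ (Finset.mem_univ i),
      ← Finset.mul_prod_erase (Finset.univ.erase i) _
        (Finset.mem_erase.mpr ⟨hij.symm, Finset.mem_univ j⟩)]
    ring
  have hc := h.cross_ne_zero hhom hn hij
  rw [hF]
  refine ordinaryAtVec_mul (ordinaryAtVec_two_mul (linearForm_isHomogeneous _)
    (linearForm_isHomogeneous _) (by rw [eval_linearForm]; exact hi)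
    (by rw [eval_linearForm]; exact hj) (fun a ha => hc ?_) fun a ha => hc ?_) ?_
  · rw [grad_linearForm, grad_linearForm] at ha
    rw [ha, map_smul, LinearMap.smul_apply, cross_self, smul_zero]
  · rw [grad_linearForm, grad_linearForm] at ha
    rw [ha, map_smul, cross_self, smul_zero]
  · rw [map_mul]
    refine mul_ne_zero (h.eval_ne_zero hhom hij hi hj) (eval_prod_ne_zero fun k hk h0 => ?_)
    rw [Finset.mem_erase, Finset.mem_erase] at hk
    rcases h.eq_or_eq hij hi hj h0 with rfl | rfl
    · exact hk.2.1 rfl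
    · exact hk.1 rfl

/-- A singular point of the union which is smooth on, or not on, the curve `Φ = 0` lies on two
components. -/
lemma of_singular (h : GeneralPosition Φ l) {q : P2 K} (hsm : ¬ MultAtLeast Φ q 2)
    (hq : MultAtLeast (Φ * ∏ i, linearForm (l i)) q 2) :
    (∃ i, OnLine (l i) q ∧ MvPolynomial.eval q.rep Φ = 0) ∨
      ∃ i j, i < j ∧ OnLine (l i) q ∧ OnLine (l j) q := by
  by_contra! hno
  obtain ⟨h1, h2⟩ := hno
  have hmult : ¬ MultAtLeastVec (Φ * ∏ i, linearForm (l i)) q.rep 2 := by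
    by_cases hl : ∃ i, OnLine (l i) q
    · obtain ⟨i, hi⟩ := hl
      rw [← Finset.mul_prod_erase Finset.univ _ (Finset.mem_univ i), mul_left_comm]
      refine not_multAtLeastVec_two_mul (by rw [grad_linearForm]; exact h.ne_zero i) ?_
      rw [map_mul]
      refine mul_ne_zero (h1 i hi) (eval_prod_ne_zero fun j hj h0 => ?_)
      rcases lt_or_gt_of_ne (Finset.ne_of_mem_erase hj) with hlt | hlt
      · exact h2 j i hlt h0 hi
      · exact h2 i j hlt hi h0
    · push Not at hl
      have hne := eval_prod_ne_zero (l := l) (S := Finset.univ) (x := q.rep) fun i _ => hl i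
      by_cases hΦ : MvPolynomial.eval q.rep Φ = 0
      · refine not_multAtLeastVec_two_mul (fun hg => hsm ?_) hne
        exact multAtLeastVec_two_iff.mpr ⟨hΦ, hg⟩
      · intro hm
        have := (multAtLeastVec_two_iff.mp hm).1
        rw [map_mul] at this
        exact mul_ne_zero hΦ hne this
  exact hmult hq

end GeneralPosition


/-! ### Counting the nodes -/

lemma exists_meet (l m : Fin 3 → K) (h : l ⨯₃ m ≠ 0) :
    ∃ q : P2 K, ∀ q', OnLine l q' ∧ OnLine m q' ↔ q' = q := by
  refine ⟨Projectivization.mk K _ h, fun q' => ⟨fun ⟨h1, h2⟩ => ?_, ?_⟩⟩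
  · obtain ⟨c, hc⟩ := exists_smul_eq_cross q'.rep_nonzero h1 h2
    rw [← q'.mk_rep, eq_comm, Projectivization.mk_eq_mk_iff']
    exact ⟨c, hc.symm⟩
  · rintro rfl
    exact ⟨(onLine_mk _ _).mpr (dot_self_cross _ _), (onLine_mk _ _).mpr (dot_cross_self _ _)⟩

namespace GeneralPosition

variable {Φ : MvPolynomial (Fin 3) K} {s n : ℕ} {l : Fin s → Fin 3 → K}

/-- There are `s * n` points where a line meets the curve, and one for each pair of lines. -/
lemma exists_nodes [IsAlgClosed K] (h : GeneralPosition Φ l) (hhom : Φ.IsHomogeneous n)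
    (hn : 1 ≤ n) :
    ∃ N : Finset (P2 K), N.card = s * n + s * (s - 1) / 2 ∧
      ∀ q, q ∈ N ↔ (∃ i, OnLine (l i) q ∧ MvPolynomial.eval q.rep Φ = 0) ∨
        ∃ i j, i < j ∧ OnLine (l i) q ∧ OnLine (l j) q := by
  classical
  have hS : ∀ i, ∃ S : Finset (P2 K), S.card = n ∧
      ∀ q, q ∈ S ↔ OnLine (l i) q ∧ MvPolynomial.eval q.rep Φ = 0 := fun i => by
    obtain ⟨u, w, ht⟩ := h.transversal i
    exact ht.ncard_inter hhom
  choose S hScard hS using hS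
  have hmt : ∀ x : (_ : Fin s) × Fin s, ∃ q : P2 K, x.2 < x.1 →
      ∀ q', OnLine (l x.2) q' ∧ OnLine (l x.1) q' ↔ q' = q := fun x => by
    by_cases hx : x.2 < x.1
    · obtain ⟨q, hq⟩ := exists_meet _ _ (h.cross_ne_zero hhom hn hx.ne)
      exact ⟨q, fun _ => hq⟩
    · exact ⟨Projectivization.mk K _ (h.ne_zero x.1), fun h => absurd h hx⟩
  choose mt hmt using hmt
  have hmeet : ∀ x : (_ : Fin s) × Fin s, x.2 < x.1 →
      OnLine (l x.2) (mt x) ∧ OnLine (l x.1) (mt x) := fun x hx => (hmt x hx _).mpr rfl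
  let T : Finset ((_ : Fin s) × Fin s) := Finset.univ.sigma fun j => Finset.Iio j
  have hT : ∀ x, x ∈ T ↔ x.2 < x.1 := fun x => by simp [T]
  refine ⟨Finset.univ.biUnion S ∪ T.image mt, ?_, fun q => ?_⟩
  · rw [Finset.card_union_of_disjoint, Finset.card_biUnion, Finset.card_image_of_injOn]
    · congr 1
      · simp [hScard]
      · simp only [T, Finset.card_sigma, Fin.card_Iio]
        rw [Fin.sum_univ_eq_sum_range (fun i => i), Finset.sum_range_id]
    · rintro ⟨b, a⟩ hx ⟨b', a'⟩ hy hxy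
      have hx' : a < b := (hT _).mp hx
      have hy' : a' < b' := (hT _).mp hy
      have h1 := hmeet ⟨b, a⟩ hx'
      have h2 := hmeet ⟨b', a'⟩ hy'
      rw [← hxy] at h2
      have h3 := h.eq_or_eq hx'.ne h1.1 h1.2 h2.1
      have h4 := h.eq_or_eq hx'.ne h1.1 h1.2 h2.2
      obtain ⟨rfl, rfl⟩ : a' = a ∧ b' = b := by
        simp only at h3 h4
        omega
      rfl
    · intro i _ j _ hij
      refine Finset.disjoint_left.mpr fun q hi hj => ?_
      exact h.eval_ne_zero hhom hij ((hS i q).mp hi).1 ((hS j q).mp hj).1 ((hS i q).mp hi).2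
    · rw [Finset.disjoint_left]
      intro q hq hq'
      obtain ⟨i, -, hi⟩ := Finset.mem_biUnion.mp hq
      obtain ⟨x, hx, rfl⟩ := Finset.mem_image.mp hq'
      have hx' := (hT x).mp hx
      exact h.eval_ne_zero hhom hx'.ne (hmeet x hx').1 (hmeet x hx').2 ((hS i _).mp hi).2
  · rw [Finset.mem_union, Finset.mem_biUnion, Finset.mem_image]
    refine or_congr (by simp [hS]) ⟨?_, ?_⟩
    · rintro ⟨x, hx, rfl⟩
      have hx' := (hT x).mp hx
      exact ⟨x.2, x.1, hx', hmeet x hx'⟩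
    · rintro ⟨i, j, hij, hq⟩
      exact ⟨⟨j, i⟩, (hT _).mpr hij, ((hmt ⟨j, i⟩ hij q).mp hq).symm⟩

lemma hasOrdinaryAndNodes [IsAlgClosed K] [CharZero K] (h : GeneralPosition Φ l)
    (hhom : Φ.IsHomogeneous n) (hn : 1 ≤ n) {r : ℕ} {p : Fin r → P2 K} {dd : Fin r → ℕ}
    (hΦ : HasOrdinaryAndNodes Φ p dd 0) (hp : ∀ i j, l i ⬝ᵥ (p j).rep ≠ 0) :
    HasOrdinaryAndNodes (Φ * ∏ i, linearForm (l i)) p dd (s * n + s * (s - 1) / 2) := by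
  obtain ⟨hord, hfin, hcard, -⟩ := hΦ
  have hsm : ∀ q, q ∉ Set.range p → ¬ MultAtLeast Φ q 2 := fun q hq hm => by
    have hmem : q ∈ {q : P2 K | q ∉ Set.range p ∧ MultAtLeast Φ q 2} := ⟨hq, hm⟩
    rw [(Set.ncard_eq_zero hfin).mp hcard] at hmem
    exact hmem
  have hrange : ∀ i q, OnLine (l i) q → q ∉ Set.range p := by
    rintro i _ hi ⟨j, rfl⟩
    exact hp i j hi
  obtain ⟨N, hN, hmem⟩ := h.exists_nodes hhom hn
  have hnode : ∀ q ∈ N, q ∉ Set.range p ∧ OrdinaryAt (Φ * ∏ i, linearForm (l i)) q 2 := by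
    intro q hq
    rcases (hmem q).mp hq with ⟨i, hi, h0⟩ | ⟨i, j, hij, hi, hj⟩
    · exact ⟨hrange i q hi, h.ordinary_curve_line hhom hi h0⟩
    · exact ⟨hrange i q hi, h.ordinary_line_line hhom hn hij.ne hi hj⟩
  have hset : {q : P2 K | q ∉ Set.range p ∧ MultAtLeast (Φ * ∏ i, linearForm (l i)) q 2} = N := by
    ext q
    constructor
    · rintro ⟨hq, hm⟩
      exact (hmem q).mpr (h.of_singular (hsm q hq) hm)
    · intro hq
      exact ⟨(hnode q hq).1, (hnode q hq).2.1.1⟩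
  refine ⟨fun j => ordinaryAtVec_mul (hord j) (eval_prod_ne_zero fun i _ => hp i j), ?_, ?_,
    fun q hq hm => ?_⟩
  · rw [hset]
    exact N.finite_toSet
  · rw [hset, Set.ncard_coe_finset, hN]
  · exact (hnode q (hset.subset ⟨hq, hm⟩)).2

end GeneralPosition

lemma genericLines_generalPosition [CharZero K] {Φ : MvPolynomial (Fin 3) K} {n : ℕ}
    (hΦ : Irreducible Φ) (hhom : Φ.IsHomogeneous n) (s : ℕ) :
    GenericLines K s (fun l => GeneralPosition Φ l) := by
  have h1 : GenericLines K s (fun l => ∀ i, l i ≠ 0) := genericLines_true fun _ h => h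
  have h2 : GenericLines K s (fun l => ∀ i, ∃ u w, Transversal Φ (l i) u w) :=
    genericLines_forall fun i => genericLines_transversal hΦ hhom i
  have h3 : GenericLines K s (fun l => ∀ x : Fin s × Fin s, x.1 ≠ x.2 →
      MvPolynomial.eval (l x.1 ⨯₃ l x.2) Φ ≠ 0) := by
    refine genericLines_forall fun x => ?_
    obtain ⟨v, hv, hv0⟩ := exists_eval_ne_zero hΦ.ne_zero
    by_cases hx : x.1 = x.2
    · exact genericLines_true fun _ _ h => absurd hx h
    · exact genericLines_mono (genericLines_pair hhom hv hv0 hx) fun _ h _ => h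
  have h4 : GenericLines K s (fun l => ∀ x : Fin s × Fin s × Fin s, x.1 ≠ x.2.1 → x.1 ≠ x.2.2 →
      x.2.1 ≠ x.2.2 → l x.2.2 ⬝ᵥ (l x.1 ⨯₃ l x.2.1) ≠ 0) := by
    refine genericLines_forall fun x => ?_
    by_cases hx : x.1 ≠ x.2.1 ∧ x.1 ≠ x.2.2 ∧ x.2.1 ≠ x.2.2
    · exact genericLines_mono (genericLines_triple hx.1 hx.2.1 hx.2.2) fun _ h _ _ _ => h
    · exact genericLines_true fun _ _ h h' h'' => absurd ⟨h, h', h''⟩ hx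
  exact genericLines_mono (genericLines_and (genericLines_and h1 h2) (genericLines_and h3 h4))
    fun l h => ⟨h.1.1, h.1.2, fun i j => h.2.1 (i, j), fun i j k => h.2.2 (i, j, k)⟩

/-- A general line does not pass through a given point. -/
lemma genericLines_avoid {s : ℕ} (i : Fin s) {v : Fin 3 → K} (hv : v ≠ 0) :
    GenericLines K s (fun l => l i ⬝ᵥ v ≠ 0) := by
  obtain ⟨k, hk⟩ := Function.ne_iff.mp hv
  have h1 : MvPolynomial.eval (Pi.single k 1) (linearForm v) ≠ 0 := by
    rw [eval_linearForm, dotProduct_single_one]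
    exact hk
  refine genericLines_mono (genericLines_single (linearForm_isHomogeneous v) h1 i) fun l hl => ?_
  rwa [eval_linearForm, dotProduct_comm] at hl

lemma nodes_eq {d d' : ℕ} (h : d' < d) :
    (d - d') * d' + (d - d') * (d - d' - 1) / 2 = d * (d - 1) / 2 - d' * (d' - 1) / 2 := by
  obtain ⟨s, rfl⟩ := Nat.exists_eq_add_of_le h.le
  rw [Nat.add_sub_cancel_left, ← Nat.choose_two_right, ← Nat.choose_two_right,
    ← Nat.choose_two_right, Nat.add_choose_eq, Finset.Nat.sum_antidiagonal_eq_sum_range_succ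
      fun i j => d'.choose i * s.choose j]
  simp only [Finset.sum_range_succ, Finset.sum_range_zero, Nat.choose_zero_right,
    Nat.choose_one_right, Nat.sub_zero, Nat.sub_self, Nat.reduceSub, one_mul, mul_one, zero_add,
    Nat.add_sub_cancel_right]
  ring

end UnionLines

/-- Let `Φ` be an irreducible plane curve of degree `d' ≥ 1` having ordinary
points of multiplicity `d_i` at pairwise distinct points `p_1, …, p_r` and no
further singularities, and let `d > d'`.  Then for a generic tuple of `d - d'`
lines, the degree-`d` curve defined by the product of `Φ` with their linear forms
is squarefree, has ordinary points of multiplicity `d_i` at the `p_i` and exactly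
`d(d-1)/2 - d'(d'-1)/2` nodes as its only further singularities. -/
theorem union_with_generic_lines (K : Type) [Field K] [IsAlgClosed K] [CharZero K]
    (r : ℕ) (d d' : ℕ) (hd' : 1 ≤ d') (hdd' : d' < d)
    (dd : Fin r → ℕ) (p : Fin r → P2 K) (hp : Function.Injective p)
    (Φ : MvPolynomial (Fin 3) K) (hΦirr : Irreducible Φ)
    (hΦhom : Φ.IsHomogeneous d') (hΦ : HasOrdinaryAndNodes Φ p dd 0) :
    GenericLines K (d - d') (fun l =>
      Squarefree (Φ * ∏ i, linearForm (l i)) ∧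
      HasOrdinaryAndNodes (Φ * ∏ i, linearForm (l i)) p dd
        (d * (d - 1) / 2 - d' * (d' - 1) / 2)) := by
  have hpts : GenericLines K (d - d') (fun l => ∀ x : Fin (d - d') × Fin r,
      dotProduct (l x.1) (p x.2).rep ≠ 0) :=
    UnionLines.genericLines_forall fun x => UnionLines.genericLines_avoid x.1 (p x.2).rep_nonzero
  refine UnionLines.genericLines_mono (UnionLines.genericLines_and
    (UnionLines.genericLines_generalPosition hΦirr hΦhom (d - d')) hpts) fun l ⟨hgen, hl⟩ => ?_
  refine ⟨hgen.squarefree hΦirr hΦhom hd', ?_⟩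
  rw [← UnionLines.nodes_eq hdd']
  exact hgen.hasOrdinaryAndNodes hΦhom hd' hΦ fun i j => hl (i, j)
end
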